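/- arXiv:cs/0605071 — 3 statements merged into one kernel-verified Lean document; each statement's English description precedes it below -/
import Mathlib

section
/- For every two-user discrete memoryless interference channel with degraded message sets in which transmitter 1 knows both messages, the capacity region satisfies C^{T₁}_{IFC} ⊆ ℛ_o, where ℛ_o is the set of all rate pairs (R₁,R₂) such that R₁ ≤ I(X₁;Y₁|X₂), R₂ ≤ I(U,X₂;Y₂), and R₁ + R₂ ≤ I(X₁;Y₁|U,X₂) + I(U,X₂;Y₂) for some finite-valued auxiliary random variable U whose joint distribution with the inputs and outputs factors as p(u,x₂)·p(x₁|u)·P(y₁,y₂|x₁,x₂). -/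
open scoped BigOperators

noncomputable section

/-- Shannon entropy (base 2) of a finitely supported probability vector. -/
def ent {A : Type*} [Fintype A] (p : A → ℝ) : ℝ :=
  -∑ a, p a * Real.logb 2 (p a)

/-- The distribution (pushforward) of a random variable `f` on a finite
probability space with probability mass function `μ`. -/
def lawOf {Ω A : Type*} [Fintype Ω] [DecidableEq A] (μ : Ω → ℝ) (f : Ω → A) : A → ℝ :=
  fun a => ∑ ω, if f ω = a then μ ω else 0

/-- Shannon entropy (base 2) of a random variable `f` on a finite probability space. -/
def entRV {Ω A : Type*} [Fintype Ω] [Fintype A] [DecidableEq A] (μ : Ω → ℝ) (f : Ω → A) : ℝ :=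
  ent (lawOf μ f)

/-- Mutual information `I(f; g)` (base 2) on a finite probability space. -/
def miRV {Ω A B : Type*} [Fintype Ω] [Fintype A] [Fintype B] [DecidableEq A] [DecidableEq B]
    (μ : Ω → ℝ) (f : Ω → A) (g : Ω → B) : ℝ :=
  entRV μ f + entRV μ g - entRV μ (fun ω => (f ω, g ω))

/-- Conditional mutual information `I(f; g | h)` (base 2) on a finite probability space. -/
def cmiRV {Ω A B C : Type*} [Fintype Ω] [Fintype A] [Fintype B] [Fintype C]
    [DecidableEq A] [DecidableEq B] [DecidableEq C]
    (μ : Ω → ℝ) (f : Ω → A) (g : Ω → B) (h : Ω → C) : ℝ :=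
  entRV μ (fun ω => (f ω, h ω)) + entRV μ (fun ω => (g ω, h ω))
    - entRV μ (fun ω => (f ω, g ω, h ω)) - entRV μ h

/-- A two-user discrete memoryless interference channel with finite input alphabets
`X1`, `X2` and finite output alphabets `Y1`, `Y2`. -/
structure DMIFC (X1 X2 Y1 Y2 : Type) [Fintype X1] [Fintype X2] [Fintype Y1] [Fintype Y2] where
  W : X1 → X2 → Y1 → Y2 → ℝ
  nonneg : ∀ x1 x2 y1 y2, 0 ≤ W x1 x2 y1 y2
  sum_one : ∀ x1 x2, ∑ y1, ∑ y2, W x1 x2 y1 y2 = 1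

variable {X1 X2 Y1 Y2 : Type} [Fintype X1] [Fintype X2] [Fintype Y1] [Fintype Y2]
  [DecidableEq X1] [DecidableEq X2] [DecidableEq Y1] [DecidableEq Y2]

/-- Average probability that receiver 1 decodes its message incorrectly, for a given
code for the IFC with degraded message sets (transmitter 1 knows both messages),
with the messages uniform and independent and the channel used `n` times without feedback. -/
def pe1 (ch : DMIFC X1 X2 Y1 Y2) (n M1 M2 : ℕ)
    (f1 : Fin M1 → Fin M2 → Fin n → X1) (f2 : Fin M2 → Fin n → X2)
    (g1 : (Fin n → Y1) → Fin M1) : ℝ :=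
  (1 / (M1 * M2) : ℝ) * ∑ w1 : Fin M1, ∑ w2 : Fin M2, ∑ y1 : Fin n → Y1, ∑ y2 : Fin n → Y2,
    (∏ i, ch.W (f1 w1 w2 i) (f2 w2 i) (y1 i) (y2 i)) * (if g1 y1 = w1 then 0 else 1)

/-- Average probability that receiver 2 decodes its message incorrectly. -/
def pe2 (ch : DMIFC X1 X2 Y1 Y2) (n M1 M2 : ℕ)
    (f1 : Fin M1 → Fin M2 → Fin n → X1) (f2 : Fin M2 → Fin n → X2)
    (g2 : (Fin n → Y2) → Fin M2) : ℝ :=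
  (1 / (M1 * M2) : ℝ) * ∑ w1 : Fin M1, ∑ w2 : Fin M2, ∑ y1 : Fin n → Y1, ∑ y2 : Fin n → Y2,
    (∏ i, ch.W (f1 w1 w2 i) (f2 w2 i) (y1 i) (y2 i)) * (if g2 y2 = w2 then 0 else 1)

/-- A rate pair `(R1, R2)` is achievable for the IFC with degraded message sets
(transmitter 1 informed) if there are codes of arbitrarily small error probability
whose rates are arbitrarily close to `(R1, R2)`. -/
def AchievableT1 (ch : DMIFC X1 X2 Y1 Y2) (R1 R2 : ℝ) : Prop :=
  ∀ ε : ℝ, 0 < ε → ∃ (n M1 M2 : ℕ) (f1 : Fin M1 → Fin M2 → Fin n → X1)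
    (f2 : Fin M2 → Fin n → X2) (g1 : (Fin n → Y1) → Fin M1) (g2 : (Fin n → Y2) → Fin M2),
    0 < n ∧ 0 < M1 ∧ 0 < M2 ∧
    R1 - ε ≤ Real.logb 2 M1 / n ∧ R2 - ε ≤ Real.logb 2 M2 / n ∧
    pe1 ch n M1 M2 f1 f2 g1 ≤ ε ∧ pe2 ch n M1 M2 f1 f2 g2 ≤ ε

/-- The capacity region `C^{T₁}_{IFC}` of the IFC with degraded message sets
(transmitter 1 knows both messages): the closure of the set of achievable rate pairs. -/
def CapacityT1 (ch : DMIFC X1 X2 Y1 Y2) : Set (ℝ × ℝ) :=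
  closure {R : ℝ × ℝ | AchievableT1 ch R.1 R.2}

/-- The joint distribution on `(U, X₁, X₂, Y₁, Y₂)` factoring as
`p(u,x₂) p(x₁|u) P(y₁,y₂|x₁,x₂)`. -/
def jointOut (ch : DMIFC X1 X2 Y1 Y2) (nU : ℕ)
    (pUX2 : Fin nU → X2 → ℝ) (pX1 : Fin nU → X1 → ℝ) :
    Fin nU × X1 × X2 × Y1 × Y2 → ℝ :=
  fun p => pUX2 p.1 p.2.2.1 * pX1 p.1 p.2.1 * ch.W p.2.1 p.2.2.1 p.2.2.2.1 p.2.2.2.2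

/-- The outer-bound region `ℛ_o`: all rate pairs `(R₁, R₂)` with
`R₁ ≤ I(X₁; Y₁ | X₂)`, `R₂ ≤ I(U, X₂; Y₂)` and
`R₁ + R₂ ≤ I(X₁; Y₁ | U, X₂) + I(U, X₂; Y₂)` for some finite-valued auxiliary
random variable `U` whose joint distribution with the inputs and outputs factors
as `p(u,x₂) p(x₁|u) P(y₁,y₂|x₁,x₂)`. -/
def Ro (ch : DMIFC X1 X2 Y1 Y2) : Set (ℝ × ℝ) :=
  {R | ∃ (nU : ℕ) (pUX2 : Fin nU → X2 → ℝ) (pX1 : Fin nU → X1 → ℝ),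
    (∀ u x2, 0 ≤ pUX2 u x2) ∧ (∑ u, ∑ x2, pUX2 u x2) = 1 ∧
    (∀ u x1, 0 ≤ pX1 u x1) ∧ (∀ u, ∑ x1, pX1 u x1 = 1) ∧
    R.1 ≤ cmiRV (jointOut ch nU pUX2 pX1)
            (fun p => p.2.1) (fun p => p.2.2.2.1) (fun p => p.2.2.1) ∧
    R.2 ≤ miRV (jointOut ch nU pUX2 pX1)
            (fun p => (p.1, p.2.2.1)) (fun p => p.2.2.2.2) ∧
    R.1 + R.2 ≤
      cmiRV (jointOut ch nU pUX2 pX1)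
          (fun p => p.2.1) (fun p => p.2.2.2.1) (fun p => (p.1, p.2.2.1))
        + miRV (jointOut ch nU pUX2 pX1)
            (fun p => (p.1, p.2.2.1)) (fun p => p.2.2.2.2)}

/-! Fano's inequality bounds `n R₁` by `I(W₁; Y₁ⁿ | W₂)` and `n R₂` by `I(W₂; Y₂ⁿ)`, up to terms
that vanish with the error probability. Csiszár's sum identity, with the auxiliary variables
`(W₂, Y₂^{i-1}, Y_{1,i+1}^n)` and a uniform time-sharing index, turns these into single-letter
bounds. The auxiliary variable found in this way has an alphabet that grows with `n`, but the bounds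
depend on it only through the profile `(p(x₁,x₂), H(Y₁|U,X₂), H(Y₂|U,X₂))`, a convex combination
of profiles with deterministic `(U, X₂)`. Since these range over a compact set in finite
dimension, their convex hull is compact, so limits of profiles are again realised by finite-valued
auxiliary variables. Letting the error probability tend to `0` gives the outer bound.
-/

section Convexity

theorem convexHull_eq_iUnion_image_stdSimplex {E : Type*} [AddCommGroup E] [Module ℝ E]
    [FiniteDimensional ℝ E] (s : Set E) :
    convexHull ℝ s = ⋃ k ∈ Finset.range (Module.finrank ℝ E + 2),
      (fun p : (Fin k → ℝ) × (Fin k → E) => ∑ i, p.1 i • p.2 i) ''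
        (stdSimplex ℝ (Fin k) ×ˢ Set.univ.pi fun _ => s) := by
  apply Set.Subset.antisymm
  · intro x hx
    obtain ⟨ι, _, z, w, hz, hindep, hw, hw1, rfl⟩ := eq_pos_convex_span_of_mem_convexHull hx
    have hcard : Fintype.card ι < Module.finrank ℝ E + 2 :=
      Nat.lt_succ_of_le (hindep.card_le_finrank_succ.trans
        (Nat.succ_le_succ (Submodule.finrank_le _)))
    let e := (Fintype.equivFin ι).symm
    refine Set.mem_biUnion (Finset.mem_coe.2 (Finset.mem_range.2 hcard))
      ⟨(w ∘ e, z ∘ e), ⟨⟨fun i => (hw _).le, ?_⟩, fun i _ => hz ⟨_, rfl⟩⟩, ?_⟩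
    · exact (e.sum_comp w).trans hw1
    · exact e.sum_comp fun i => w i • z i
  · refine Set.iUnion₂_subset fun k _ => ?_
    rintro _ ⟨⟨w, z⟩, ⟨⟨hw, hw1⟩, hz⟩, rfl⟩
    exact mem_convexHull_of_exists_fintype w z hw hw1 (fun i => hz i trivial) rfl

theorem isCompact_convexHull {E : Type*} [AddCommGroup E] [Module ℝ E] [TopologicalSpace E]
    [ContinuousAdd E] [ContinuousSMul ℝ E] [FiniteDimensional ℝ E] {s : Set E}
    (hs : IsCompact s) : IsCompact (convexHull ℝ s) := by
  rw [convexHull_eq_iUnion_image_stdSimplex]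
  refine Finset.isCompact_biUnion _ fun k _ => IsCompact.image ?_ (by fun_prop)
  exact (isCompact_stdSimplex ℝ (Fin k)).prod (isCompact_univ_pi fun _ => hs)

theorem isClosed_setOf_exists_le {α β γ : Type*} [TopologicalSpace α] [TopologicalSpace β]
    [TopologicalSpace γ] [Preorder γ] [OrderClosedTopology γ] {K : Set β} (hK : IsCompact K)
    {f : α → γ} (hf : Continuous f) {g : β → γ} (hg : Continuous g) :
    IsClosed {a | ∃ b ∈ K, f a ≤ g b} := by
  have : CompactSpace K := isCompact_iff_compactSpace.1 hK
  have hclosed : IsClosed {p : α × K | f p.1 ≤ g p.2} :=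
    isClosed_le (by fun_prop) (by fun_prop)
  convert isClosedMap_fst_of_compactSpace _ hclosed using 1
  ext a
  simp

theorem exists_mem_stdSimplex_eq_smul {A : Type*} [Fintype A] [Nonempty A] {r : A → ℝ}
    (hr : ∀ a, 0 ≤ r a) : ∃ q ∈ stdSimplex ℝ A, r = (∑ a, r a) • q := by
  classical
  rcases eq_or_ne (∑ a, r a) 0 with h0 | h0
  · refine ⟨_, single_mem_stdSimplex ℝ (Classical.arbitrary A), ?_⟩
    rw [h0, zero_smul]
    exact funext fun a => (Finset.sum_eq_zero_iff_of_nonneg fun a _ => hr a).1 h0 a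
      (Finset.mem_univ a)
  · refine ⟨(∑ a, r a)⁻¹ • r, ⟨fun a => ?_, ?_⟩, (smul_inv_smul₀ h0 r).symm⟩
    · exact mul_nonneg (inv_nonneg.2 (Finset.sum_nonneg fun a _ => hr a)) (hr a)
    · simp only [Pi.smul_apply, smul_eq_mul, ← Finset.mul_sum, inv_mul_cancel₀ h0]

end Convexity

section HomogeneousEntropy

variable {A J : Type*} [Fintype A] [Fintype J]

/-- The homogeneous extension of Shannon entropy (in bits) from probability vectors to all
nonnegative vectors: the entropy of the normalised vector, weighted by the total mass. -/
def homEnt (p : A → ℝ) : ℝ :=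
  (∑ a, p a) * Real.logb 2 (∑ a, p a) - ∑ a, p a * Real.logb 2 (p a)

theorem continuous_mul_logb (b : ℝ) : Continuous fun x : ℝ => x * Real.logb b x := by
  simp only [Real.logb, ← mul_div_assoc]
  exact Real.continuous_mul_log.div_const _

theorem continuous_ent : Continuous (ent : (A → ℝ) → ℝ) :=
  (continuous_finsetSum _ fun a _ => (continuous_mul_logb 2).comp (continuous_apply a)).neg

theorem continuous_homEnt : Continuous (homEnt : (A → ℝ) → ℝ) :=
  ((continuous_mul_logb 2).comp (continuous_finsetSum _ fun a _ => continuous_apply a)).sub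
    (continuous_finsetSum _ fun a _ => (continuous_mul_logb 2).comp (continuous_apply a))

theorem homEnt_smul (c : ℝ) (p : A → ℝ) : homEnt (c • p) = c * homEnt p := by
  rcases eq_or_ne c 0 with rfl | hc
  · simp [homEnt]
  have mul_logb_mul (x : ℝ) : c * x * Real.logb 2 (c * x)
      = c * (x * Real.logb 2 x) + x * (c * Real.logb 2 c) := by
    rcases eq_or_ne x 0 with rfl | hx
    · simp
    · rw [Real.logb_mul hc hx]; ring
  simp only [homEnt, Pi.smul_apply, smul_eq_mul, ← Finset.mul_sum, mul_logb_mul,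
    Finset.sum_add_distrib, ← Finset.sum_mul]
  ring

theorem mul_logb_sub_mul_logb_le {x y : ℝ} (hx : 0 ≤ x) (hy : 0 ≤ y) (hyx : y = 0 → x = 0) :
    x * Real.logb 2 y - x * Real.logb 2 x ≤ (y - x) / Real.log 2 := by
  have hlog2 : 0 < Real.log 2 := Real.log_pos one_lt_two
  rcases hx.eq_or_lt with rfl | hx
  · simpa using div_nonneg hy hlog2.le
  have hy : 0 < y := hy.lt_of_ne fun h => hx.ne' (hyx h.symm)
  calc x * Real.logb 2 y - x * Real.logb 2 x = x * Real.log (y / x) / Real.log 2 := by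
        rw [Real.log_div hy.ne' hx.ne', Real.logb, Real.logb]; ring
    _ ≤ x * (y / x - 1) / Real.log 2 := by
        gcongr; exact Real.log_le_sub_one_of_pos (by positivity)
    _ = (y - x) / Real.log 2 := by field_simp

theorem homEnt_le_neg_sum_mul_logb {p r : A → ℝ} (hp : ∀ a, 0 ≤ p a) (hr : ∀ a, 0 ≤ r a)
    (hr1 : ∑ a, r a ≤ 1) (hrp : ∀ a, r a = 0 → p a = 0) :
    homEnt p ≤ -∑ a, p a * Real.logb 2 (r a) := by
  set S := ∑ a, p a with hS
  have hS0 : 0 ≤ S := Finset.sum_nonneg fun a _ => hp a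
  have hSp (a : A) (h : S = 0) : p a = 0 :=
    (Finset.sum_eq_zero_iff_of_nonneg fun a _ => hp a).1 h a (Finset.mem_univ a)
  have term_le (a : A) : p a * Real.logb 2 S - p a * Real.logb 2 (p a)
      + p a * Real.logb 2 (r a) ≤ (r a * S - p a) / Real.log 2 := by
    refine le_of_eq_of_le ?_ (mul_logb_sub_mul_logb_le (hp a) (mul_nonneg (hr a) hS0) fun h =>
      (mul_eq_zero.1 h).elim (hrp a) (hSp a))
    rcases eq_or_ne (p a) 0 with h | h
    · simp [h]
    · rw [Real.logb_mul (mt (hrp a) h) (mt (hSp a) h)]; ring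
  have hsum := Finset.sum_le_sum fun a (_ : a ∈ Finset.univ) => term_le a
  rw [Finset.sum_add_distrib, Finset.sum_sub_distrib, ← Finset.sum_mul, ← hS, ← Finset.sum_div,
    Finset.sum_sub_distrib, ← Finset.sum_mul, ← hS] at hsum
  have hnonpos : ((∑ a, r a) * S - S) / Real.log 2 ≤ 0 :=
    div_nonpos_of_nonpos_of_nonneg (by nlinarith) (Real.log_pos one_lt_two).le
  rw [homEnt, ← hS]
  linarith

theorem sum_homEnt_le {p : J → A → ℝ} (hp : ∀ j a, 0 ≤ p j a) :
    ∑ j, homEnt (p j) ≤ homEnt (∑ j, p j) := by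
  set t : A → ℝ := ∑ j, p j
  have ht_apply (a : A) : t a = ∑ j, p j a := Finset.sum_apply a _ _
  have ht0 (a : A) : 0 ≤ t a := ht_apply a ▸ Finset.sum_nonneg fun j _ => hp j a
  set S := ∑ a, t a with hS
  have hp_zero (a : A) (h : t a = 0) (j : J) : p j a = 0 :=
    (Finset.sum_eq_zero_iff_of_nonneg fun j _ => hp j a).1 (ht_apply a ▸ h) j (Finset.mem_univ j)
  have ht_zero (a : A) (h : S = 0) : t a = 0 :=
    (Finset.sum_eq_zero_iff_of_nonneg fun a _ => ht0 a).1 h a (Finset.mem_univ a)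
  calc ∑ j, homEnt (p j) ≤ ∑ j, -∑ a, p j a * Real.logb 2 (t a / S) := by
        refine Finset.sum_le_sum fun j _ => homEnt_le_neg_sum_mul_logb (hp j)
          (fun a => div_nonneg (ht0 a) (Finset.sum_nonneg fun a _ => ht0 a)) ?_ fun a h => ?_
        · rw [← Finset.sum_div]; exact div_self_le_one _
        · exact hp_zero a ((div_eq_zero_iff.1 h).elim id (ht_zero a)) j
    _ = -∑ a, t a * Real.logb 2 (t a / S) := by
        rw [Finset.sum_neg_distrib, Finset.sum_comm]
        simp only [← Finset.sum_mul, ht_apply]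
    _ = homEnt t := by
        rw [homEnt, ← hS, hS, Finset.sum_mul, ← Finset.sum_sub_distrib, ← Finset.sum_neg_distrib]
        refine Finset.sum_congr rfl fun a _ => ?_
        rcases eq_or_ne (t a) 0 with h | h
        · simp [h]
        · rw [Real.logb_div h (mt (ht_zero a) h)]; ring

end HomogeneousEntropy

section FiniteEntropy

variable {Ω A B C : Type*} [Fintype Ω] [DecidableEq A] [DecidableEq B] [DecidableEq C]

theorem lawOf_apply (μ : Ω → ℝ) (f : Ω → A) (a : A) :
    lawOf μ f a = ∑ ω, μ ω * if f ω = a then 1 else 0 := by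
  simp [lawOf]

theorem lawOf_nonneg {μ : Ω → ℝ} (hμ : ∀ ω, 0 ≤ μ ω) (f : Ω → A) (a : A) : 0 ≤ lawOf μ f a :=
  Finset.sum_nonneg fun ω _ => by split_ifs <;> simp [hμ]

theorem continuous_lawOf (f : Ω → A) : Continuous fun μ : Ω → ℝ => lawOf μ f := by
  refine continuous_pi fun a => ?_
  simp only [lawOf_apply]
  fun_prop

theorem sum_lawOf_mul [Fintype A] (μ : Ω → ℝ) (f : Ω → A) (φ : A → ℝ) :
    ∑ a, lawOf μ f a * φ a = ∑ ω, μ ω * φ (f ω) := by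
  simp only [lawOf, Finset.sum_mul]
  rw [Finset.sum_comm]
  simp [ite_mul]

theorem sum_lawOf [Fintype A] (μ : Ω → ℝ) (f : Ω → A) : ∑ a, lawOf μ f a = ∑ ω, μ ω := by
  simpa using sum_lawOf_mul μ f fun _ => 1

theorem lawOf_comp [Fintype A] (μ : Ω → ℝ) (f : Ω → A) (g : A → B) :
    lawOf μ (fun ω => g (f ω)) = lawOf (lawOf μ f) g := by
  ext b
  rw [lawOf_apply, lawOf_apply, sum_lawOf_mul μ f fun a => if g a = b then 1 else 0]

theorem sum_lawOf_prodMk [Fintype A] (μ : Ω → ℝ) (f : Ω → A) (g : Ω → B) (b : B) :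
    ∑ a, lawOf μ (fun ω => (f ω, g ω)) (a, b) = lawOf μ g b := by
  simp only [lawOf]
  rw [Finset.sum_comm]
  simp [ite_and]

variable [Fintype A] [Fintype B] [Fintype C]

theorem entRV_comp (μ : Ω → ℝ) (f : Ω → A) (g : A → B) :
    entRV μ (fun ω => g (f ω)) = entRV (lawOf μ f) g := by
  rw [entRV, entRV, lawOf_comp]

@[fun_prop]
theorem continuous_entRV (f : Ω → A) : Continuous fun μ : Ω → ℝ => entRV μ f :=
  continuous_ent.comp (continuous_lawOf f)

theorem entRV_congr (μ : Ω → ℝ) {f : Ω → A} {g : Ω → B} (hfg : f.FactorsThrough g)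
    (hgf : g.FactorsThrough f) : entRV μ f = entRV μ g := by
  have fibre_iff (ω ω' : Ω) : f ω = f ω' ↔ g ω = g ω' := ⟨fun h => hgf h, fun h => hfg h⟩
  simp only [entRV, ent, sum_lawOf_mul μ _ fun a => Real.logb 2 (lawOf μ _ a)]
  simp only [lawOf, fibre_iff]

theorem entRV_of_lawOf_eq_inv_card {μ : Ω → ℝ} {f : Ω → A}
    (h : ∀ a, lawOf μ f a = (Fintype.card A : ℝ)⁻¹) : entRV μ f = Real.logb 2 (Fintype.card A) := by
  rcases isEmpty_or_nonempty A with _ | _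
  · simp [entRV, ent]
  · simp [entRV, ent, h]

/-- The conditional entropy `H(f | g)` in bits. -/
def condEnt (μ : Ω → ℝ) (f : Ω → A) (g : Ω → B) : ℝ :=
  entRV μ (fun ω => (f ω, g ω)) - entRV μ g

theorem miRV_eq (μ : Ω → ℝ) (f : Ω → A) (g : Ω → B) :
    miRV μ f g = entRV μ g - condEnt μ g f := by
  rw [miRV, condEnt, entRV_congr μ (f := fun ω => (f ω, g ω)) (g := fun ω => (g ω, f ω))]
  · ring
  all_goals intro ω ω'; simp only [Prod.mk.injEq]; tauto

theorem cmiRV_eq (μ : Ω → ℝ) (f : Ω → A) (g : Ω → B) (h : Ω → C) :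
    cmiRV μ f g h = condEnt μ g h - condEnt μ g (fun ω => (f ω, h ω)) := by
  rw [cmiRV, condEnt, condEnt,
    entRV_congr μ (f := fun ω => (f ω, g ω, h ω)) (g := fun ω => (g ω, f ω, h ω))]
  · ring
  all_goals intro ω ω'; simp only [Prod.mk.injEq]; tauto

theorem condEnt_eq_sum_homEnt (μ : Ω → ℝ) (f : Ω → A) (g : Ω → B) :
    condEnt μ f g = ∑ b, homEnt fun a => lawOf μ (fun ω => (f ω, g ω)) (a, b) := by
  simp only [condEnt, entRV, ent, homEnt, sum_lawOf_prodMk, Finset.sum_sub_distrib]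
  rw [Fintype.sum_prod_type, Finset.sum_comm]
  ring

theorem condEnt_unit {μ : Ω → ℝ} (hμ1 : ∑ ω, μ ω = 1) (f : Ω → A) :
    condEnt μ f (fun _ => ()) = entRV μ f := by
  rw [condEnt, entRV_congr μ (f := fun ω => (f ω, ())) (g := f)]
  · simp [entRV, ent, lawOf, hμ1]
  all_goals intro ω ω'; simp

theorem condEnt_congr (μ : Ω → ℝ) (f : Ω → A) {g : Ω → B} {k : Ω → C} (hgk : g.FactorsThrough k)
    (hkg : k.FactorsThrough g) : condEnt μ f g = condEnt μ f k := by
  rw [condEnt, condEnt, entRV_congr μ hgk hkg,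
    entRV_congr μ (f := fun ω => (f ω, g ω)) (g := fun ω => (f ω, k ω))]
  · exact fun ω ω' h => Prod.ext (Prod.ext_iff.1 h).1 (hgk (Prod.ext_iff.1 h).2)
  · exact fun ω ω' h => Prod.ext (Prod.ext_iff.1 h).1 (hkg (Prod.ext_iff.1 h).2)

theorem condEnt_prodMk_le {μ : Ω → ℝ} (hμ : ∀ ω, 0 ≤ μ ω) (f : Ω → A) (g : Ω → B) (k : Ω → C) :
    condEnt μ f (fun ω => (g ω, k ω)) ≤ condEnt μ f k := by
  rw [condEnt_eq_sum_homEnt, condEnt_eq_sum_homEnt, Fintype.sum_prod_type, Finset.sum_comm]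
  refine Finset.sum_le_sum fun c _ => (sum_homEnt_le fun b a => lawOf_nonneg hμ _ _).trans_eq ?_
  congr 1
  ext a
  rw [Finset.sum_apply, ← sum_lawOf_prodMk μ g]
  refine Finset.sum_congr rfl fun b _ => ?_
  simp only [lawOf, Prod.mk.injEq, and_left_comm]

theorem condEnt_le_of_factorsThrough {μ : Ω → ℝ} (hμ : ∀ ω, 0 ≤ μ ω) (f : Ω → A) {g : Ω → B}
    {k : Ω → C} (h : k.FactorsThrough g) : condEnt μ f g ≤ condEnt μ f k := by
  refine le_of_eq_of_le (condEnt_congr μ f (k := fun ω => (g ω, k ω)) ?_ ?_)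
    (condEnt_prodMk_le hμ f g k)
  · exact fun ω ω' hω => (Prod.ext_iff.1 hω).1
  · exact fun ω ω' hω => Prod.ext hω (h hω)

theorem condEnt_le_neg_sum_mul_logb {μ : Ω → ℝ} (hμ : ∀ ω, 0 ≤ μ ω) (f : Ω → A) (g : Ω → B)
    {r : B → A → ℝ} (hr : ∀ b a, 0 ≤ r b a) (hr1 : ∀ b, ∑ a, r b a ≤ 1)
    (hrμ : ∀ ω, r (g ω) (f ω) = 0 → μ ω = 0) :
    condEnt μ f g ≤ -∑ ω, μ ω * Real.logb 2 (r (g ω) (f ω)) := by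
  calc condEnt μ f g
      ≤ ∑ b, -∑ a, lawOf μ (fun ω => (f ω, g ω)) (a, b) * Real.logb 2 (r b a) := by
        rw [condEnt_eq_sum_homEnt]
        refine Finset.sum_le_sum fun b _ => homEnt_le_neg_sum_mul_logb
          (fun a => lawOf_nonneg hμ _ _) (hr b) (hr1 b) fun a ha =>
            Finset.sum_eq_zero fun ω _ => ?_
        refine ite_eq_right_iff.2 fun hω => hrμ ω ?_
        obtain ⟨rfl, rfl⟩ := Prod.ext_iff.1 hω
        exact ha
    _ = -∑ ω, μ ω * Real.logb 2 (r (g ω) (f ω)) := by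
        rw [Finset.sum_neg_distrib, Finset.sum_comm, ← Fintype.sum_prod_type',
          sum_lawOf_mul μ (fun ω => (f ω, g ω)) fun x => Real.logb 2 (r x.2 x.1)]

end FiniteEntropy

section Fano

/-- The part of Fano's bound at error probability `ε` that does not depend on the number of
messages. -/
def fanoDefect (ε : ℝ) : ℝ :=
  -(Real.logb 2 (1 - ε) + ε * Real.logb 2 ε)

theorem fanoDefect_nonneg {ε : ℝ} (hε : 0 ≤ ε) (hε1 : ε ≤ 1) : 0 ≤ fanoDefect ε :=
  neg_nonneg.2 <| add_nonpos (Real.logb_nonpos one_lt_two (by linarith) (by linarith))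
    (mul_nonpos_of_nonneg_of_nonpos hε (Real.logb_nonpos one_lt_two hε hε1))

theorem tendsto_fanoDefect : Filter.Tendsto fanoDefect (nhds 0) (nhds 0) := by
  have hlog : ContinuousAt (fun ε : ℝ => Real.logb 2 (1 - ε)) 0 :=
    ContinuousAt.div_const (ContinuousAt.log (by fun_prop) (by norm_num)) _
  have hdefect : ContinuousAt fanoDefect 0 :=
    (hlog.add (continuous_mul_logb 2).continuousAt).neg
  simpa [ContinuousAt, fanoDefect] using hdefect

variable {Ω A B : Type*} [Fintype Ω] [Fintype A] [Fintype B] [DecidableEq A] [DecidableEq B]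

theorem sum_ite_eq_le_one {ε : ℝ} (hε : 0 ≤ ε) (a : A) :
    ∑ a', (if a = a' then 1 - ε else ε / Fintype.card A) ≤ 1 := by
  have hcard : (Fintype.card A : ℝ) ≠ 0 := by
    exact_mod_cast (Fintype.card_pos_iff.2 ⟨a⟩).ne'
  calc ∑ a', (if a = a' then 1 - ε else ε / Fintype.card A)
      ≤ ∑ a', ((if a = a' then 1 - ε else 0) + ε / Fintype.card A) := by
        refine Finset.sum_le_sum fun a' _ => ?_
        split_ifs
        · exact le_add_of_nonneg_right (by positivity)
        · simp
    _ = 1 := by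
        rw [Finset.sum_add_distrib, Finset.sum_ite_eq]
        simp [field]

theorem sum_mul_ite_eq_add {μ : Ω → ℝ} (hμ1 : ∑ ω, μ ω = 1) (p : Ω → Prop) [DecidablePred p]
    (x y : ℝ) : ∑ ω, μ ω * (if p ω then x else y)
      = (1 - ∑ ω, μ ω * (if p ω then 0 else 1)) * x
        + (∑ ω, μ ω * (if p ω then 0 else 1)) * y := by
  have term_eq (ω : Ω) : μ ω * (if p ω then x else y)
      = μ ω * x + μ ω * (if p ω then 0 else 1) * (y - x) := by
    split_ifs <;> ring
  rw [Finset.sum_congr rfl fun ω _ => term_eq ω, Finset.sum_add_distrib, ← Finset.sum_mul,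
    ← Finset.sum_mul, hμ1]
  ring

theorem condEnt_le_of_error_le {μ : Ω → ℝ} (hμ : ∀ ω, 0 ≤ μ ω) (hμ1 : ∑ ω, μ ω = 1)
    (f : Ω → A) (g : Ω → B) (d : B → A) {ε : ℝ} (hε : 0 < ε) (hε1 : ε < 1)
    (herr : ∑ ω, μ ω * (if d (g ω) = f ω then 0 else 1) ≤ ε) :
    condEnt μ f g ≤ fanoDefect ε + ε * Real.logb 2 (Fintype.card A) := by
  rcases isEmpty_or_nonempty Ω with _ | ⟨⟨ω₀⟩⟩
  · simp at hμ1
  have hcard : (1 : ℝ) ≤ Fintype.card A := by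
    exact_mod_cast Fintype.card_pos_iff.2 ⟨f ω₀⟩
  have hcard0 : (0 : ℝ) < Fintype.card A := by linarith
  set q := ∑ ω, μ ω * (if d (g ω) = f ω then 0 else 1) with hq
  have hq0 : 0 ≤ q := Finset.sum_nonneg fun ω _ => by split_ifs <;> simp [hμ]
  let r (b : B) (a : A) : ℝ := if d b = a then 1 - ε else ε / Fintype.card A
  have hr (b : B) (a : A) : 0 < r b a := by
    dsimp only [r]
    split_ifs
    · linarith
    · positivity
  have cross_entropy_le := condEnt_le_neg_sum_mul_logb hμ f g (fun b a => (hr b a).le)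
    (fun b => sum_ite_eq_le_one hε.le (d b)) fun ω h => absurd h (hr _ _).ne'
  simp only [r, apply_ite (Real.logb 2)] at cross_entropy_le
  rw [sum_mul_ite_eq_add hμ1, Real.logb_div hε.ne' hcard0.ne', ← hq] at cross_entropy_le
  have hlogcard : 0 ≤ Real.logb 2 (Fintype.card A) := Real.logb_nonneg one_lt_two hcard
  have hlogε : Real.logb 2 ε ≤ 0 := Real.logb_nonpos one_lt_two hε.le hε1.le
  have hlog1ε : Real.logb 2 (1 - ε) ≤ 0 :=
    Real.logb_nonpos one_lt_two (by linarith) (by linarith)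
  rw [fanoDefect]
  nlinarith

theorem sub_fano_le_miRV {μ : Ω → ℝ} (hμ : ∀ ω, 0 ≤ μ ω) (hμ1 : ∑ ω, μ ω = 1)
    (f : Ω → A) (g : Ω → B) (d : B → A) {ε : ℝ} (hε : 0 < ε) (hε1 : ε < 1)
    (herr : ∑ ω, μ ω * (if d (g ω) = f ω then 0 else 1) ≤ ε) :
    entRV μ f - (fanoDefect ε + ε * Real.logb 2 (Fintype.card A)) ≤ miRV μ f g := by
  have fano := condEnt_le_of_error_le hμ hμ1 f g d hε hε1 herr
  rw [condEnt] at fano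
  rw [miRV]
  linarith

theorem sub_fano_le_cmiRV {C : Type*} [Fintype C] [DecidableEq C] {μ : Ω → ℝ}
    (hμ : ∀ ω, 0 ≤ μ ω) (hμ1 : ∑ ω, μ ω = 1) (f : Ω → A) (g : Ω → B) (k : Ω → C) (d : B → A)
    {ε : ℝ} (hε : 0 < ε) (hε1 : ε < 1)
    (herr : ∑ ω, μ ω * (if d (g ω) = f ω then 0 else 1) ≤ ε) :
    condEnt μ f k - (fanoDefect ε + ε * Real.logb 2 (Fintype.card A)) ≤ cmiRV μ f g k := by
  have fano := condEnt_le_of_error_le hμ hμ1 f (fun ω => (g ω, k ω)) (fun b => d b.1) hε hε1 herr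
  rw [condEnt] at fano
  rw [cmiRV, condEnt]
  linarith

end Fano

section ConditionalLaw

variable {Ω B D : Type*} [Fintype Ω] [Fintype B]

/-- `K` is the conditional law of `Y` given `T` under `μ`. The definition through test functions
makes sense without dividing by the (possibly zero) probabilities of the values of `T`. -/
def HasCondLaw (μ : Ω → ℝ) (Y : Ω → B) (T : Ω → D) (K : D → B → ℝ) : Prop :=
  ∀ φ : B → D → ℝ, ∑ ω, μ ω * φ (Y ω) (T ω) = ∑ ω, μ ω * ∑ y, K (T ω) y * φ y (T ω)

namespace HasCondLaw

variable {μ : Ω → ℝ} {Y : Ω → B} {T : Ω → D} {K : D → B → ℝ}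

theorem map {B' : Type*} [Fintype B'] [DecidableEq B'] (h : HasCondLaw μ Y T K) (π : B → B') :
    HasCondLaw μ (fun ω => π (Y ω)) T (fun t => lawOf (K t) π) := by
  intro φ
  simp only [fun t => sum_lawOf_mul (K t) π fun y => φ y t]
  exact h fun y t => φ (π y) t

theorem coarsen {D' : Type*} {K : D' → B → ℝ} {τ : D → D'}
    (h : HasCondLaw μ Y T fun t => K (τ t)) : HasCondLaw μ Y (fun ω => τ (T ω)) K :=
  fun φ => h fun y t => φ y (τ t)

variable [DecidableEq B] [DecidableEq D]

theorem lawOf_prodMk (h : HasCondLaw μ Y T K) (y : B) (t : D) :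
    lawOf μ (fun ω => (Y ω, T ω)) (y, t) = lawOf μ T t * K t y := by
  rw [lawOf_apply, lawOf_apply, Finset.sum_mul]
  refine (h fun y' t' => if (y', t') = (y, t) then 1 else 0).trans ?_
  refine Finset.sum_congr rfl fun ω _ => ?_
  by_cases ht : T ω = t <;> simp [ht]

theorem lawOf_prodMk_eq_sum {A C : Type*} [Fintype A] [DecidableEq A] [DecidableEq C]
    {X : Ω → A} {V : Ω → C} {K : A × C → B → ℝ} (h : HasCondLaw μ Y (fun ω => (X ω, V ω)) K)
    (y : B) (v : C) :
    lawOf μ (fun ω => (Y ω, V ω)) (y, v)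
      = ∑ x, lawOf μ (fun ω => (X ω, V ω)) (x, v) * K (x, v) y := by
  rw [← sum_lawOf_prodMk μ X]
  refine Finset.sum_congr rfl fun x _ => ?_
  rw [← h.lawOf_prodMk]
  simp only [lawOf, Prod.mk.injEq, and_left_comm]

variable [Fintype D]

theorem condEnt_eq (h : HasCondLaw μ Y T K) :
    condEnt μ Y T = ∑ ω, μ ω * homEnt (K (T ω)) := by
  rw [condEnt_eq_sum_homEnt, ← sum_lawOf_mul μ T fun t => homEnt (K t)]
  refine Finset.sum_congr rfl fun t _ => ?_
  rw [← homEnt_smul]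
  exact congrArg homEnt (funext fun y => h.lawOf_prodMk y t)

theorem condEnt_coarsen {D' : Type*} [Fintype D'] [DecidableEq D'] {K : D' → B → ℝ} {τ : D → D'}
    (h : HasCondLaw μ Y T fun t => K (τ t)) :
    condEnt μ Y T = condEnt μ Y fun ω => τ (T ω) := by
  rw [h.condEnt_eq, h.coarsen.condEnt_eq]

end HasCondLaw

end ConditionalLaw

section TimeSharing

variable {ι Ω A C D : Type*} [Fintype ι] [Fintype Ω] [Fintype A] [Fintype C]

/-- The law of a pair `(Q, ω)` with `Q` uniform on `ι`, independent of `ω` with law `μ`. -/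
def timeShare (ι : Type*) [Fintype ι] (μ : Ω → ℝ) : ι × Ω → ℝ :=
  fun z => (Fintype.card ι : ℝ)⁻¹ * μ z.2

omit [Fintype Ω] in
theorem timeShare_nonneg {μ : Ω → ℝ} (hμ : ∀ ω, 0 ≤ μ ω) (z : ι × Ω) : 0 ≤ timeShare ι μ z :=
  mul_nonneg (by positivity) (hμ _)

theorem sum_timeShare [Nonempty ι] {μ : Ω → ℝ} (hμ1 : ∑ ω, μ ω = 1) :
    ∑ z, timeShare ι μ z = 1 := by
  simp [timeShare, Fintype.sum_prod_type, ← Finset.mul_sum, hμ1]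

theorem HasCondLaw.timeShare {μ : Ω → ℝ} {Y : ι → Ω → A} {T : ι → Ω → D} {K : D → A → ℝ}
    (h : ∀ i, HasCondLaw μ (Y i) (T i) K) :
    HasCondLaw (timeShare ι μ) (fun z => Y z.1 z.2) (fun z => T z.1 z.2) K := by
  intro φ
  simp only [_root_.timeShare, Fintype.sum_prod_type, mul_assoc, ← Finset.mul_sum]
  simp only [h _ φ]

variable [DecidableEq ι] [DecidableEq A] [DecidableEq C]

theorem condEnt_timeShare (μ : Ω → ℝ) (Y : ι → Ω → A) (V : ι → Ω → C) :
    condEnt (timeShare ι μ) (fun z => Y z.1 z.2) (fun z => (z.1, V z.1 z.2))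
      = (Fintype.card ι : ℝ)⁻¹ * ∑ i, condEnt μ (Y i) (V i) := by
  have lawOf_timeShare (i : ι) (c : C) :
      (fun a => lawOf (timeShare ι μ) (fun z => (Y z.1 z.2, z.1, V z.1 z.2)) (a, i, c))
        = (Fintype.card ι : ℝ)⁻¹ • fun a => lawOf μ (fun ω => (Y i ω, V i ω)) (a, c) := by
    ext a
    simp only [lawOf_apply, timeShare, Fintype.sum_prod_type, Pi.smul_apply, smul_eq_mul,
      Finset.mul_sum]
    refine (Fintype.sum_eq_single i fun j hj => ?_).trans ?_
    · simp [hj]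
    · simp
  simp only [condEnt_eq_sum_homEnt, Fintype.sum_prod_type, lawOf_timeShare, homEnt_smul,
    Finset.mul_sum]

end TimeSharing

section ChainRule

variable {ι A : Type*} [DecidableEq ι]

/-- The restriction of the sequence `z` to the positions in `s`, with the other positions
erased. -/
def mask (s : Finset ι) (z : ι → A) : ι → Option A :=
  fun j => if j ∈ s then some (z j) else none

theorem mask_eq_mask_iff {s : Finset ι} {z z' : ι → A} :
    mask s z = mask s z' ↔ ∀ j ∈ s, z j = z' j := by
  simp only [funext_iff, mask]
  refine forall_congr' fun j => ?_
  split_ifs with hj <;> simp [hj]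

theorem mask_comp_update_of_notMem {B : Type*} {s : Finset ι} {i : ι} (hi : i ∉ s) (π : B → A)
    (z : ι → B) (b : B) :
    mask s (fun j => π (Function.update z i b j)) = mask s fun j => π (z j) :=
  mask_eq_mask_iff.2 fun j hj => by
    rw [Function.update_of_ne (ne_of_mem_of_not_mem hj hi)]

/-- The first `k` positions of a sequence of length `n`. -/
def before {n : ℕ} (k : ℕ) : Finset (Fin n) :=
  Finset.univ.filter fun j => j.val < k

variable {n : ℕ}

theorem mem_before {k : ℕ} {j : Fin n} : j ∈ before k ↔ j.val < k := by
  simp [before]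

theorem before_succ (i : Fin n) : before (i.val + 1) = insert i (before i.val) := by
  ext j
  simp only [mem_before, Finset.mem_insert, Fin.ext_iff]
  omega

theorem compl_before (i : Fin n) : (before i.val)ᶜ = insert i (before (i.val + 1))ᶜ := by
  ext j
  simp only [mem_before, Finset.mem_insert, Finset.mem_compl, Fin.ext_iff]
  omega

theorem sum_fin_sub (F : ℕ → ℝ) (n : ℕ) : ∑ i : Fin n, (F (i.val + 1) - F i.val) = F n - F 0 := by
  rw [Fin.sum_univ_eq_sum_range fun i => F (i + 1) - F i, Finset.sum_range_sub]

variable {Ω B C : Type*} [Fintype Ω] [Fintype A] [Fintype B] [Fintype C]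
  [DecidableEq A] [DecidableEq B] [DecidableEq C]

theorem condEnt_eq_entRV_sub (μ : Ω → ℝ) {f : Ω → A} {g : Ω → B} {k : Ω → C}
    (hk : k.FactorsThrough fun ω => (f ω, g ω))
    (hfg : Function.FactorsThrough (fun ω => (f ω, g ω)) k) :
    condEnt μ f g = entRV μ k - entRV μ g := by
  rw [condEnt, entRV_congr μ hfg hk]

theorem sum_condEnt_mask_before (μ : Ω → ℝ) (V : Ω → C) (Z : Ω → Fin n → A) :
    ∑ i : Fin n, condEnt μ (fun ω => Z ω i) (fun ω => (V ω, mask (before i) (Z ω)))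
      = condEnt μ Z V := by
  have chain_step (i : Fin n) :
      condEnt μ (fun ω => Z ω i) (fun ω => (V ω, mask (before i) (Z ω)))
        = entRV μ (fun ω => (V ω, mask (before (i.val + 1)) (Z ω)))
          - entRV μ (fun ω => (V ω, mask (before i) (Z ω))) := by
    apply condEnt_eq_entRV_sub <;> intro ω ω' <;>
      simp only [before_succ, Prod.mk.injEq, mask_eq_mask_iff, Finset.forall_mem_insert] <;> tauto
  simp only [chain_step]
  rw [sum_fin_sub fun k => entRV μ fun ω => (V ω, mask (before k) (Z ω)), condEnt]
  congr 1 <;> apply entRV_congr <;> intro ω ω' <;>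
    simp only [Prod.mk.injEq, mask_eq_mask_iff, mem_before] <;> simp +contextual [funext_iff]

theorem sum_condEnt_sub_condEnt (μ : Ω → ℝ) (V : Ω → C) (Z : Ω → Fin n → A) (Z' : Ω → Fin n → B) :
    ∑ i : Fin n, (condEnt μ (fun ω => Z ω i)
        (fun ω => (V ω, mask (before i) (Z' ω), mask (before (i.val + 1))ᶜ (Z ω)))
      - condEnt μ (fun ω => Z' ω i)
        (fun ω => (V ω, mask (before i) (Z' ω), mask (before (i.val + 1))ᶜ (Z ω))))
      = condEnt μ Z V - condEnt μ Z' V := by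
  let F (k : ℕ) : ℝ := entRV μ fun ω => (V ω, mask (before k) (Z' ω), mask (before k)ᶜ (Z ω))
  have condEnt_left (i : Fin n) : condEnt μ (fun ω => Z ω i)
      (fun ω => (V ω, mask (before i) (Z' ω), mask (before (i.val + 1))ᶜ (Z ω)))
        = F i.val - entRV μ
          (fun ω => (V ω, mask (before i) (Z' ω), mask (before (i.val + 1))ᶜ (Z ω))) := by
    apply condEnt_eq_entRV_sub <;> intro ω ω' <;>
      simp only [compl_before, Prod.mk.injEq, mask_eq_mask_iff, Finset.forall_mem_insert] <;> tauto
  have condEnt_right (i : Fin n) : condEnt μ (fun ω => Z' ω i)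
      (fun ω => (V ω, mask (before i) (Z' ω), mask (before (i.val + 1))ᶜ (Z ω)))
        = F (i.val + 1) - entRV μ
          (fun ω => (V ω, mask (before i) (Z' ω), mask (before (i.val + 1))ᶜ (Z ω))) := by
    apply condEnt_eq_entRV_sub <;> intro ω ω' <;>
      simp only [before_succ, Prod.mk.injEq, mask_eq_mask_iff, Finset.forall_mem_insert] <;> tauto
  have F_zero : F 0 = entRV μ fun ω => (Z ω, V ω) := by
    apply entRV_congr <;> intro ω ω' <;>
      simp only [Prod.mk.injEq, mask_eq_mask_iff, Finset.mem_compl, mem_before] <;>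
      simp +contextual [funext_iff]
  have F_n : F n = entRV μ fun ω => (Z' ω, V ω) := by
    apply entRV_congr <;> intro ω ω' <;>
      simp only [Prod.mk.injEq, mask_eq_mask_iff, Finset.mem_compl, mem_before] <;>
      simp +contextual [funext_iff]
  simp only [condEnt_left, condEnt_right, sub_sub_sub_cancel_right]
  rw [← neg_inj, ← Finset.sum_neg_distrib]
  simp only [neg_sub]
  rw [sum_fin_sub F, F_zero, F_n, condEnt, condEnt]
  ring

end ChainRule

set_option synthInstance.maxSize 500

section SingleLetter

variable {Ω A B C D : Type*} [Fintype Ω] [Fintype A] [Fintype B] [Fintype C] [Fintype D]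
  [DecidableEq A] [DecidableEq B] [DecidableEq C] [DecidableEq D] {n : ℕ}

theorem condEnt_timeShare_mask_before (μ : Ω → ℝ) (V : Ω → C) (Z : Ω → Fin n → A) :
    condEnt (timeShare (Fin n) μ) (fun z => Z z.2 z.1)
      (fun z => (z.1, V z.2, mask (before z.1) (Z z.2))) = (n : ℝ)⁻¹ * condEnt μ Z V := by
  rw [condEnt_timeShare μ (fun i ω => Z ω i) fun i ω => (V ω, mask (before i) (Z ω)),
    sum_condEnt_mask_before, Fintype.card_fin]

theorem inv_mul_condEnt_le_condEnt_timeShare {μ : Ω → ℝ} (hμ : ∀ ω, 0 ≤ μ ω) {V : Ω → C}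
    (Z : Ω → Fin n → A) {T : Fin n × Ω → D}
    (hT : T.FactorsThrough fun z => (z.1, V z.2)) :
    (n : ℝ)⁻¹ * condEnt μ Z V ≤ condEnt (timeShare (Fin n) μ) (fun z => Z z.2 z.1) T := by
  rw [← condEnt_timeShare_mask_before]
  refine condEnt_le_of_factorsThrough (timeShare_nonneg hμ) _ fun z z' h => hT ?_
  simp only [Prod.mk.injEq] at h ⊢
  exact ⟨h.1, h.2.1⟩

/-- The time-shared auxiliary variable `(Q, V, Z'₁ … Z'_{Q-1}, Z_{Q+1} … Z_n)` of Csiszár's sum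
identity. -/
def csiszarAux (V : Ω → C) (Z : Ω → Fin n → A) (Z' : Ω → Fin n → B) (z : Fin n × Ω) :
    Fin n × C × (Fin n → Option B) × (Fin n → Option A) :=
  (z.1, V z.2, mask (before z.1) (Z' z.2), mask (before (z.1.val + 1))ᶜ (Z z.2))

theorem condEnt_csiszarAux_sub (μ : Ω → ℝ) (V : Ω → C) (Z : Ω → Fin n → A)
    (Z' : Ω → Fin n → B) :
    condEnt (timeShare (Fin n) μ) (fun z => Z z.2 z.1) (csiszarAux V Z Z')
        - condEnt (timeShare (Fin n) μ) (fun z => Z' z.2 z.1) (csiszarAux V Z Z')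
      = (n : ℝ)⁻¹ * (condEnt μ Z V - condEnt μ Z' V) := by
  let aux (i : Fin n) (ω : Ω) :=
    (V ω, mask (before i) (Z' ω), mask (before (i.val + 1))ᶜ (Z ω))
  have hZ := condEnt_timeShare μ (fun i ω => Z ω i) aux
  have hZ' := condEnt_timeShare μ (fun i ω => Z' ω i) aux
  rw [Fintype.card_fin] at hZ hZ'
  unfold csiszarAux
  rw [hZ, hZ', ← sum_condEnt_sub_condEnt, Finset.sum_sub_distrib, mul_sub]

theorem condEnt_csiszarAux_le {μ : Ω → ℝ} (hμ : ∀ ω, 0 ≤ μ ω) (V : Ω → C) (Z : Ω → Fin n → A)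
    (Z' : Ω → Fin n → B) :
    condEnt (timeShare (Fin n) μ) (fun z => Z' z.2 z.1) (csiszarAux V Z Z')
      ≤ (n : ℝ)⁻¹ * condEnt μ Z' V := by
  rw [← condEnt_timeShare_mask_before]
  refine condEnt_le_of_factorsThrough (timeShare_nonneg hμ) _ fun z z' h => ?_
  simp only [csiszarAux, Prod.mk.injEq] at h ⊢
  exact ⟨h.1, h.2.1, h.2.2.1⟩

end SingleLetter

section Memoryless

variable {M ι B D : Type*} [Fintype M] [Fintype ι] [Fintype B]

/-- The joint law of a uniform message `m` and the outputs of the independent noisy uses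
`P m i`, `i : ι`. -/
def memoryless (P : M → ι → B → ℝ) : M × (ι → B) → ℝ :=
  fun ω => (Fintype.card M : ℝ)⁻¹ * ∏ i, P ω.1 i (ω.2 i)

omit [Fintype B] in
theorem memoryless_nonneg {P : M → ι → B → ℝ} (hP : ∀ m i b, 0 ≤ P m i b) (ω : M × (ι → B)) :
    0 ≤ memoryless P ω :=
  mul_nonneg (by positivity) (Finset.prod_nonneg fun _ _ => hP _ _ _)

variable [DecidableEq ι]

theorem lawOf_memoryless_fst [DecidableEq M] {P : M → ι → B → ℝ} (hP1 : ∀ m i, ∑ b, P m i b = 1)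
    (m : M) : lawOf (memoryless P) Prod.fst m = (Fintype.card M : ℝ)⁻¹ := by
  have sum_prod (m : M) : ∑ y : ι → B, ∏ i, P m i (y i) = 1 := by
    rw [← Fintype.piFinset_univ, ← Finset.prod_univ_sum]
    simp [hP1]
  simp [lawOf_apply, memoryless, Fintype.sum_prod_type, ← Finset.mul_sum, sum_prod]

theorem sum_memoryless [Nonempty M] {P : M → ι → B → ℝ} (hP1 : ∀ m i, ∑ b, P m i b = 1) :
    ∑ ω, memoryless P ω = 1 := by
  classical
  rw [← sum_lawOf _ Prod.fst]
  simp [lawOf_memoryless_fst hP1]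

/-- Exchanging coordinate `i` of a sequence with a spare symbol. -/
@[simps apply]
def swapCoord (i : ι) : (ι → B) × B ≃ (ι → B) × B where
  toFun p := (Function.update p.1 i p.2, p.1 i)
  invFun p := (Function.update p.1 i p.2, p.1 i)
  left_inv p := by simp
  right_inv p := by simp

omit [Fintype B] in
theorem prod_update_mul (P : ι → B → ℝ) (i : ι) (y : ι → B) (b : B) :
    (∏ j, P j (Function.update y i b j)) * P i (y i) = (∏ j, P j (y j)) * P i b := by
  have prod_compl : ∏ j ∈ {i}ᶜ, P j (Function.update y i b j) = ∏ j ∈ {i}ᶜ, P j (y j) :=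
    Finset.prod_congr rfl fun j hj => by
      rw [Function.update_of_ne (by simpa using hj)]
  rw [Fintype.prod_eq_mul_prod_compl i, Fintype.prod_eq_mul_prod_compl i fun j => P j (y j),
    prod_compl, Function.update_self]
  ring

theorem sum_prod_mul_resample {P : ι → B → ℝ} {i : ι} (hPi : ∑ b, P i b = 1)
    {F : B → (ι → B) → ℝ} (hF : ∀ b y b', F b (Function.update y i b') = F b y) :
    ∑ y : ι → B, (∏ j, P j (y j)) * F (y i) y
      = ∑ y : ι → B, (∏ j, P j (y j)) * ∑ b, P i b * F b y := by
  calc ∑ y : ι → B, (∏ j, P j (y j)) * F (y i) y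
      = ∑ p : (ι → B) × B, (∏ j, P j (p.1 j)) * P i p.2 * F (p.1 i) p.1 := by
        simp only [Fintype.sum_prod_type, ← Finset.sum_mul, ← Finset.mul_sum, hPi, mul_one]
    _ = ∑ p : (ι → B) × B, (∏ j, P j (p.1 j)) * P i p.2 * F p.2 p.1 := by
        rw [← (swapCoord i).sum_comp]
        refine Finset.sum_congr rfl fun p _ => ?_
        simp only [swapCoord_apply, prod_update_mul, Function.update_self, hF]
    _ = ∑ y : ι → B, (∏ j, P j (y j)) * ∑ b, P i b * F b y := by
        simp only [Fintype.sum_prod_type, Finset.mul_sum, mul_assoc]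

theorem hasCondLaw_memoryless {P : M → ι → B → ℝ} {i : ι} (hPi : ∀ m, ∑ b, P m i b = 1)
    {T : M × (ι → B) → D} (hT : ∀ m y b, T (m, Function.update y i b) = T (m, y))
    {K : D → B → ℝ} (hK : ∀ ω, K (T ω) = P ω.1 i) :
    HasCondLaw (memoryless P) (fun ω => ω.2 i) T K := by
  intro φ
  simp only [hK, memoryless, Fintype.sum_prod_type, mul_assoc, ← Finset.mul_sum]
  congr 1
  exact Finset.sum_congr rfl fun m _ =>
    sum_prod_mul_resample (hPi m) (F := fun b y => φ b (T (m, y))) fun b y b' => by rw [hT]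

end Memoryless

namespace DMIFC

variable (ch : DMIFC X1 X2 Y1 Y2)

section Kernel

omit [DecidableEq X1] [DecidableEq X2] [DecidableEq Y1] [DecidableEq Y2]

/-- The transition kernel of the channel, from input pairs to output pairs. -/
def kernel (x : X1 × X2) (y : Y1 × Y2) : ℝ :=
  ch.W x.1 x.2 y.1 y.2

theorem kernel_nonneg (x : X1 × X2) (y : Y1 × Y2) : 0 ≤ ch.kernel x y :=
  ch.nonneg _ _ _ _

theorem sum_kernel (x : X1 × X2) : ∑ y, ch.kernel x y = 1 := by
  rw [Fintype.sum_prod_type]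
  exact ch.sum_one x.1 x.2

/-- The joint law of the output pair and the input pair when the inputs have law `p`. -/
def outputInputLaw (p : X1 × X2 → ℝ) : (Y1 × Y2) × (X1 × X2) → ℝ :=
  fun z => p z.2 * ch.kernel z.2 z.1

@[fun_prop]
theorem continuous_outputInputLaw : Continuous ch.outputInputLaw := by
  unfold outputInputLaw
  fun_prop

/-- The (homogeneous) entropy of the function `π` of the outputs when transmitter 2 sends `x2` and
the first input has the subprobability law `q`. -/
def outputEnt {Z : Type*} [Fintype Z] [DecidableEq Z] (π : Y1 × Y2 → Z) (x2 : X2) (q : X1 → ℝ) :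
    ℝ :=
  homEnt fun z => ∑ x1, q x1 * lawOf (ch.kernel (x1, x2)) π z

theorem continuous_outputEnt {Z : Type*} [Fintype Z] [DecidableEq Z] (π : Y1 × Y2 → Z) (x2 : X2) :
    Continuous (ch.outputEnt π x2) :=
  continuous_homEnt.comp (by fun_prop)

theorem outputEnt_smul {Z : Type*} [Fintype Z] [DecidableEq Z] (π : Y1 × Y2 → Z) (x2 : X2) (c : ℝ)
    (q : X1 → ℝ) : ch.outputEnt π x2 (c • q) = c * ch.outputEnt π x2 q := by
  rw [outputEnt, outputEnt, ← homEnt_smul]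
  congr 1
  ext z
  simp [Finset.mul_sum, mul_assoc]

end Kernel

section Atom

omit [DecidableEq X1]

/-- The contribution to an entropy profile of a value of the auxiliary variable: the input law,
supported on `x2`, and the entropies of the two outputs. -/
def atom (x2 : X2) (q : X1 → ℝ) : (X1 × X2 → ℝ) × ℝ × ℝ :=
  (fun x => if x.2 = x2 then q x.1 else 0,
    ch.outputEnt Prod.fst x2 q, ch.outputEnt Prod.snd x2 q)

theorem continuous_atom (x2 : X2) : Continuous (ch.atom x2) := by
  refine Continuous.prodMk (continuous_pi fun x => ?_)
    ((ch.continuous_outputEnt _ x2).prodMk (ch.continuous_outputEnt _ x2))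
  split_ifs <;> fun_prop

theorem atom_smul (x2 : X2) (c : ℝ) (q : X1 → ℝ) : ch.atom x2 (c • q) = c • ch.atom x2 q := by
  refine Prod.ext (funext fun x => ?_)
    (Prod.ext (ch.outputEnt_smul _ _ _ _) (ch.outputEnt_smul _ _ _ _))
  simp [atom]

/-- The set of all entropy profiles, that is, convex combinations of atoms of probability laws. The
convex coefficients play the role of the law of an auxiliary variable with finitely many values. -/
def profiles : Set ((X1 × X2 → ℝ) × ℝ × ℝ) :=
  convexHull ℝ (⋃ x2, ch.atom x2 '' stdSimplex ℝ X1)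

theorem isCompact_profiles : IsCompact ch.profiles :=
  isCompact_convexHull <| isCompact_iUnion fun x2 =>
    (isCompact_stdSimplex ℝ X1).image (ch.continuous_atom x2)

end Atom

/-- The three bounds defining the outer region, as a function of the entropy profile
`(p(x₁,x₂), H(Y₁|V), H(Y₂|V))`, where `V = (U,X₂)`. -/
def rateBound (s : (X1 × X2 → ℝ) × ℝ × ℝ) : ℝ × ℝ × ℝ :=
  let ν := ch.outputInputLaw s.1
  (cmiRV ν (fun z => z.2.1) (fun z => z.1.1) (fun z => z.2.2),
    entRV ν (fun z => z.1.2) - s.2.2,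
    s.2.1 - condEnt ν (fun z => z.1.1) (fun z => z.2) + (entRV ν (fun z => z.1.2) - s.2.2))

theorem continuous_rateBound : Continuous ch.rateBound := by
  unfold rateBound cmiRV condEnt
  fun_prop

/-- The rate pairs meeting the bounds of the outer region for some entropy profile. -/
def profileRegion : Set (ℝ × ℝ) :=
  {R | ∃ s ∈ ch.profiles, (R.1, R.2, R.1 + R.2) ≤ ch.rateBound s}

theorem isClosed_profileRegion : IsClosed ch.profileRegion :=
  isClosed_setOf_exists_le ch.isCompact_profiles (by fun_prop) ch.continuous_rateBound

section Profile

variable {Ω C : Type*} [Fintype Ω] [Fintype C] [DecidableEq C] {μ : Ω → ℝ} {X : Ω → X1}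
  {V : Ω → C} {x2 : C → X2} {Y : Ω → Y1 × Y2}

/-- The entropy profile of a transmission in which the second input is `x2 V`. -/
def profile (μ : Ω → ℝ) (X : Ω → X1) (V : Ω → C) (x2 : C → X2) (Y : Ω → Y1 × Y2) :
    (X1 × X2 → ℝ) × ℝ × ℝ :=
  (lawOf μ fun ω => (X ω, x2 (V ω)), condEnt μ (fun ω => (Y ω).1) V,
    condEnt μ (fun ω => (Y ω).2) V)

variable {ch}

omit [DecidableEq X2] [DecidableEq Y1] [DecidableEq Y2] in
theorem condEnt_eq_sum_outputEnt {Z : Type*} [Fintype Z] [DecidableEq Z]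
    (h : HasCondLaw μ Y (fun ω => (X ω, V ω)) fun t => ch.kernel (t.1, x2 t.2))
    (π : Y1 × Y2 → Z) :
    condEnt μ (fun ω => π (Y ω)) V
      = ∑ v, ch.outputEnt π (x2 v) fun x => lawOf μ (fun ω => (X ω, V ω)) (x, v) := by
  rw [condEnt_eq_sum_homEnt]
  exact Finset.sum_congr rfl fun v _ =>
    congrArg homEnt (funext fun z => (h.map π).lawOf_prodMk_eq_sum z v)

theorem profile_eq_sum_atom
    (h : HasCondLaw μ Y (fun ω => (X ω, V ω)) fun t => ch.kernel (t.1, x2 t.2)) :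
    profile μ X V x2 Y
      = ∑ v, ch.atom (x2 v) fun x => lawOf μ (fun ω => (X ω, V ω)) (x, v) := by
  refine Prod.ext ?_ (Prod.ext ?_ ?_)
  · ext ⟨x, b⟩
    simp only [Prod.fst_sum, Finset.sum_apply, atom, profile]
    rw [lawOf_comp μ (fun ω => (X ω, V ω)) fun t => (t.1, x2 t.2), lawOf,
      Fintype.sum_prod_type_right]
    simp [ite_and, eq_comm]
  · simp only [Prod.fst_sum, Prod.snd_sum, atom]
    exact condEnt_eq_sum_outputEnt h Prod.fst
  · simp only [Prod.snd_sum, atom]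
    exact condEnt_eq_sum_outputEnt h Prod.snd

theorem profile_mem_profiles (hμ : ∀ ω, 0 ≤ μ ω) (hμ1 : ∑ ω, μ ω = 1)
    (h : HasCondLaw μ Y (fun ω => (X ω, V ω)) fun t => ch.kernel (t.1, x2 t.2)) :
    profile μ X V x2 Y ∈ ch.profiles := by
  rcases isEmpty_or_nonempty Ω with _ | ⟨⟨ω₀⟩⟩
  · simp at hμ1
  have : Nonempty X1 := ⟨X ω₀⟩
  choose q hq hq_eq using fun v => exists_mem_stdSimplex_eq_smul
    (r := fun x => lawOf μ (fun ω => (X ω, V ω)) (x, v)) fun x => lawOf_nonneg hμ _ _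
  have atom_eq (v : C) : ch.atom (x2 v) (fun x => lawOf μ (fun ω => (X ω, V ω)) (x, v))
      = lawOf μ V v • ch.atom (x2 v) (q v) := by
    rw [← atom_smul, ← sum_lawOf_prodMk μ X V v, ← hq_eq]
  simp only [profile_eq_sum_atom h, atom_eq]
  refine (convex_convexHull ℝ _).sum_mem (fun v _ => lawOf_nonneg hμ V v)
    ((sum_lawOf μ V).trans hμ1) fun v _ => subset_convexHull ℝ _ ?_
  exact Set.mem_iUnion_of_mem (x2 v) ⟨q v, hq v, rfl⟩

theorem rateBound_profile
    (h : HasCondLaw μ Y (fun ω => (X ω, V ω)) fun t => ch.kernel (t.1, x2 t.2)) :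
    ch.rateBound (profile μ X V x2 Y)
      = (cmiRV μ X (fun ω => (Y ω).1) (fun ω => x2 (V ω)), miRV μ V (fun ω => (Y ω).2),
        cmiRV μ X (fun ω => (Y ω).1) V + miRV μ V (fun ω => (Y ω).2)) := by
  have hinput : HasCondLaw μ Y (fun ω => (X ω, x2 (V ω))) ch.kernel :=
    h.coarsen (K := ch.kernel) (τ := fun t : X1 × C => (t.1, x2 t.2))
  have outputInputLaw_eq : ch.outputInputLaw (lawOf μ fun ω => (X ω, x2 (V ω)))
      = lawOf μ fun ω => (Y ω, X ω, x2 (V ω)) :=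
    funext fun z => (hinput.lawOf_prodMk z.1 z.2).symm
  have condEnt_input : condEnt μ (fun ω => (Y ω).1) (fun ω => (X ω, V ω))
      = condEnt μ (fun ω => (Y ω).1) (fun ω => (X ω, x2 (V ω))) :=
    (h.map Prod.fst).condEnt_coarsen (K := fun x => lawOf (ch.kernel x) Prod.fst)
      (τ := fun t : X1 × C => (t.1, x2 t.2))
  rw [cmiRV_eq μ X _ V, miRV_eq, condEnt_input]
  simp only [rateBound, profile, outputInputLaw_eq, cmiRV, condEnt, ← entRV_comp]

theorem mem_profileRegion (hμ : ∀ ω, 0 ≤ μ ω) (hμ1 : ∑ ω, μ ω = 1)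
    (h : HasCondLaw μ Y (fun ω => (X ω, V ω)) fun t => ch.kernel (t.1, x2 t.2)) {R1 R2 : ℝ}
    (hR1 : R1 ≤ cmiRV μ X (fun ω => (Y ω).1) (fun ω => x2 (V ω)))
    (hR2 : R2 ≤ miRV μ V (fun ω => (Y ω).2))
    (hR : R1 + R2 ≤ cmiRV μ X (fun ω => (Y ω).1) V + miRV μ V (fun ω => (Y ω).2)) :
    (R1, R2) ∈ ch.profileRegion :=
  ⟨_, profile_mem_profiles hμ hμ1 h, by rw [rateBound_profile h]; exact ⟨hR1, hR2, hR⟩⟩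

end Profile

section JointOut

variable {N : ℕ}

omit [DecidableEq X1] [DecidableEq X2] [DecidableEq Y1] [DecidableEq Y2] in
theorem hasCondLaw_jointOut (pUX2 : Fin N → X2 → ℝ) (pX1 : Fin N → X1 → ℝ) :
    HasCondLaw (jointOut ch N pUX2 pX1) (fun p => p.2.2.2) (fun p => (p.2.1, p.1, p.2.2.1))
      fun t => ch.kernel (t.1, t.2.2) := by
  intro φ
  simp only [jointOut, Fintype.sum_prod_type, mul_assoc, ← Finset.mul_sum, kernel]
  simp only [← Finset.sum_mul, ch.sum_one, one_mul]

omit [DecidableEq Y1] [DecidableEq Y2] in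
theorem lawOf_jointOut_inputs (pUX2 : Fin N → X2 → ℝ) (pX1 : Fin N → X1 → ℝ) (x1 : X1)
    (u : Fin N) (x2 : X2) :
    lawOf (jointOut ch N pUX2 pX1) (fun p => (p.2.1, p.1, p.2.2.1)) (x1, u, x2)
      = pUX2 u x2 * pX1 u x1 := by
  simp only [lawOf, jointOut, Fintype.sum_prod_type, Prod.mk.injEq, ite_and, mul_assoc]
  simp [← Finset.mul_sum, ch.sum_one]

theorem profile_jointOut (pUX2 : Fin N → X2 → ℝ) (pX1 : Fin N → X1 → ℝ) :
    profile (jointOut ch N pUX2 pX1) (fun p => p.2.1) (fun p => (p.1, p.2.2.1)) Prod.snd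
        (fun p => p.2.2.2)
      = ∑ u, ∑ x2, pUX2 u x2 • ch.atom x2 (pX1 u) := by
  rw [profile_eq_sum_atom (ch.hasCondLaw_jointOut pUX2 pX1), Fintype.sum_prod_type]
  refine Finset.sum_congr rfl fun u _ => Finset.sum_congr rfl fun x2 _ => ?_
  rw [← atom_smul]
  exact congrArg (ch.atom x2) (funext fun x1 => ch.lawOf_jointOut_inputs pUX2 pX1 x1 u x2)

theorem exists_profile_jointOut_eq {s : (X1 × X2 → ℝ) × ℝ × ℝ} (hs : s ∈ ch.profiles) :
    ∃ (N : ℕ) (pUX2 : Fin N → X2 → ℝ) (pX1 : Fin N → X1 → ℝ),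
      (∀ u x2, 0 ≤ pUX2 u x2) ∧ ∑ u, ∑ x2, pUX2 u x2 = 1 ∧ (∀ u, pX1 u ∈ stdSimplex ℝ X1) ∧
      profile (jointOut ch N pUX2 pX1) (fun p => p.2.1) (fun p => (p.1, p.2.2.1)) Prod.snd
        (fun p => p.2.2.2) = s := by
  obtain ⟨ι, _, w, z, hw, hw1, hz, rfl⟩ := mem_convexHull_iff_exists_fintype.1 hs
  simp only [Set.mem_iUnion] at hz
  choose x2 q hq hqz using hz
  let e := (Fintype.equivFin ι).symm
  refine ⟨Fintype.card ι, fun u b => if b = x2 (e u) then w (e u) else 0, fun u => q (e u),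
    fun u b => ?_, ?_, fun u => hq _, ?_⟩
  · dsimp only
    split_ifs
    exacts [hw _, le_rfl]
  · simpa using (e.sum_comp w).trans hw1
  · simpa [profile_jointOut, hqz] using e.sum_comp fun i => w i • z i

theorem profileRegion_subset_Ro : ch.profileRegion ⊆ Ro ch := by
  rintro R ⟨s, hs, hR⟩
  obtain ⟨N, pUX2, pX1, hpUX2, hpUX2_sum, hpX1, rfl⟩ := ch.exists_profile_jointOut_eq hs
  rw [rateBound_profile (ch.hasCondLaw_jointOut pUX2 pX1)] at hR
  exact ⟨N, pUX2, pX1, hpUX2, hpUX2_sum, fun u => (hpX1 u).1, fun u => (hpX1 u).2,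
    hR.1, hR.2.1, hR.2.2⟩

end JointOut

end DMIFC

namespace DMIFC

section Code

variable (ch : DMIFC X1 X2 Y1 Y2) {n M1 M2 : ℕ} (f1 : Fin M1 → Fin M2 → Fin n → X1)
  (f2 : Fin M2 → Fin n → X2)

section Law

omit [DecidableEq X1] [DecidableEq X2] [DecidableEq Y1] [DecidableEq Y2]

/-- The joint law of the pair of messages and the sequence of output pairs when the code with
encoders `f1` and `f2` is used. -/
def codeLaw : (Fin M1 × Fin M2) × (Fin n → Y1 × Y2) → ℝ :=
  memoryless fun w i => ch.kernel (f1 w.1 w.2 i, f2 w.2 i)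

theorem codeLaw_nonneg (ω : (Fin M1 × Fin M2) × (Fin n → Y1 × Y2)) : 0 ≤ ch.codeLaw f1 f2 ω :=
  memoryless_nonneg (fun _ _ _ => ch.kernel_nonneg _ _) ω

theorem sum_codeLaw [NeZero M1] [NeZero M2] : ∑ ω, ch.codeLaw f1 f2 ω = 1 :=
  sum_memoryless fun _ _ => ch.sum_kernel _

theorem sum_codeLaw_mul (F : Fin M1 → Fin M2 → (Fin n → Y1) → (Fin n → Y2) → ℝ) :
    ∑ ω, ch.codeLaw f1 f2 ω * F ω.1.1 ω.1.2 (fun i => (ω.2 i).1) (fun i => (ω.2 i).2)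
      = (1 / (M1 * M2) : ℝ) * ∑ w1, ∑ w2, ∑ y1 : Fin n → Y1, ∑ y2 : Fin n → Y2,
          (∏ i, ch.W (f1 w1 w2 i) (f2 w2 i) (y1 i) (y2 i)) * F w1 w2 y1 y2 := by
  simp only [Fintype.sum_prod_type, Finset.mul_sum]
  refine Finset.sum_congr rfl fun w1 _ => Finset.sum_congr rfl fun w2 _ => ?_
  rw [← (Equiv.arrowProdEquivProdArrow (Fin n) (fun _ => Y1) fun _ => Y2).symm.sum_comp,
    Fintype.sum_prod_type]
  simp [codeLaw, memoryless, kernel, mul_assoc]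

theorem hasCondLaw_timeShare_codeLaw {D : Type*}
    {T : Fin n → (Fin M1 × Fin M2) × (Fin n → Y1 × Y2) → D} {τ : D → X1 × X2}
    (hT : ∀ i w y b, T i (w, Function.update y i b) = T i (w, y))
    (hτ : ∀ i ω, τ (T i ω) = (f1 ω.1.1 ω.1.2 i, f2 ω.1.2 i)) :
    HasCondLaw (timeShare (Fin n) (ch.codeLaw f1 f2)) (fun z => z.2.2 z.1)
      (fun z => T z.1 z.2) fun t => ch.kernel (τ t) :=
  HasCondLaw.timeShare fun i =>
    hasCondLaw_memoryless (P := fun w i => ch.kernel (f1 w.1 w.2 i, f2 w.2 i))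
      (fun _ => ch.sum_kernel _) (hT i) fun ω => congrArg ch.kernel (hτ i ω)

theorem lawOf_codeLaw_messages (w : Fin M1 × Fin M2) :
    lawOf (ch.codeLaw f1 f2) (fun ω => ω.1) w = (Fintype.card (Fin M1 × Fin M2) : ℝ)⁻¹ :=
  lawOf_memoryless_fst (fun _ _ => ch.sum_kernel _) w

theorem lawOf_codeLaw_message2 [NeZero M1] (w2 : Fin M2) :
    lawOf (ch.codeLaw f1 f2) (fun ω => ω.1.2) w2 = (Fintype.card (Fin M2) : ℝ)⁻¹ := by
  have hM1 : (M1 : ℝ) ≠ 0 := NeZero.ne _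
  rw [← sum_lawOf_prodMk _ fun ω => ω.1.1]
  refine (Finset.sum_congr rfl fun w1 _ => ch.lawOf_codeLaw_messages f1 f2 (w1, w2)).trans ?_
  simp [field]

theorem entRV_codeLaw_messages [NeZero M1] [NeZero M2] :
    entRV (ch.codeLaw f1 f2) (fun ω => ω.1) = Real.logb 2 M1 + Real.logb 2 M2 := by
  rw [entRV_of_lawOf_eq_inv_card (ch.lawOf_codeLaw_messages f1 f2), Fintype.card_prod,
    Fintype.card_fin, Fintype.card_fin, Nat.cast_mul,
    Real.logb_mul (NeZero.ne _) (NeZero.ne _)]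

theorem entRV_codeLaw_message2 [NeZero M1] :
    entRV (ch.codeLaw f1 f2) (fun ω => ω.1.2) = Real.logb 2 M2 := by
  rw [entRV_of_lawOf_eq_inv_card (ch.lawOf_codeLaw_message2 f1 f2), Fintype.card_fin]

end Law

omit [DecidableEq X1] [DecidableEq X2] [DecidableEq Y2] in
theorem fano_message1 [NeZero M1] [NeZero M2] (g1 : (Fin n → Y1) → Fin M1) {ε : ℝ} (hε : 0 < ε)
    (hε1 : ε < 1) (herr : pe1 ch n M1 M2 f1 f2 g1 ≤ ε) :
    (1 - ε) * Real.logb 2 M1 - fanoDefect ε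
      ≤ cmiRV (ch.codeLaw f1 f2) (fun ω => ω.1.1) (fun ω i => (ω.2 i).1) (fun ω => ω.1.2) := by
  have condEnt_message1 :
      condEnt (ch.codeLaw f1 f2) (fun ω => ω.1.1) (fun ω => ω.1.2) = Real.logb 2 M1 := by
    rw [condEnt, entRV_codeLaw_message2, entRV_codeLaw_messages, add_sub_cancel_right]
  have fano := sub_fano_le_cmiRV (ch.codeLaw_nonneg f1 f2) (ch.sum_codeLaw f1 f2)
    (fun ω => ω.1.1) (fun ω i => (ω.2 i).1) (fun ω => ω.1.2) g1 hε hε1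
    ((ch.sum_codeLaw_mul f1 f2 fun w1 _ y1 _ => if g1 y1 = w1 then 0 else 1).trans_le herr)
  rw [condEnt_message1, Fintype.card_fin] at fano
  linarith

omit [DecidableEq X1] [DecidableEq X2] [DecidableEq Y1] in
theorem fano_message2 [NeZero M1] [NeZero M2] (g2 : (Fin n → Y2) → Fin M2) {ε : ℝ} (hε : 0 < ε)
    (hε1 : ε < 1) (herr : pe2 ch n M1 M2 f1 f2 g2 ≤ ε) :
    (1 - ε) * Real.logb 2 M2 - fanoDefect ε
      ≤ miRV (ch.codeLaw f1 f2) (fun ω => ω.1.2) (fun ω i => (ω.2 i).2) := by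
  have fano := sub_fano_le_miRV (ch.codeLaw_nonneg f1 f2) (ch.sum_codeLaw f1 f2)
    (fun ω => ω.1.2) (fun ω i => (ω.2 i).2) g2 hε hε1
    ((ch.sum_codeLaw_mul f1 f2 fun _ w2 _ y2 => if g2 y2 = w2 then 0 else 1).trans_le herr)
  rw [entRV_codeLaw_message2, Fintype.card_fin] at fano
  linarith

/-- The values of the auxiliary variable `V = (Q, W₂, Y₂^{Q-1}, Y_{1,Q+1}^n)` of the converse. -/
abbrev CodeAux (Y1 Y2 : Type) (n M2 : ℕ) : Type :=
  Fin n × Fin M2 × (Fin n → Option Y2) × (Fin n → Option Y1)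

/-- The auxiliary variable of the converse, in the role of `(U, X₂)`. It contains `W₂` and the
time-sharing variable, and therefore determines the second input. -/
def codeAux (z : Fin n × (Fin M1 × Fin M2) × (Fin n → Y1 × Y2)) : CodeAux Y1 Y2 n M2 :=
  csiszarAux (fun ω => ω.1.2) (fun ω i => (ω.2 i).1) (fun ω i => (ω.2 i).2) z

omit [DecidableEq X1] [DecidableEq X2] [DecidableEq Y1] [DecidableEq Y2] in
theorem hasCondLaw_codeAux :
    HasCondLaw (timeShare (Fin n) (ch.codeLaw f1 f2)) (fun z => z.2.2 z.1)
      (fun z => (f1 z.2.1.1 z.2.1.2 z.1, codeAux z))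
      fun t => ch.kernel (t.1, f2 t.2.2.1 t.2.1) := by
  refine ch.hasCondLaw_timeShare_codeLaw f1 f2
    (T := fun i ω => (f1 ω.1.1 ω.1.2 i, codeAux (i, ω)))
    (τ := fun t : X1 × CodeAux Y1 Y2 n M2 => (t.1, f2 t.2.2.1 t.2.1))
    (fun i w y b => ?_) fun i ω => rfl
  have notMem_before : i ∉ before i.val := by simp [mem_before]
  have notMem_compl : i ∉ (before (i.val + 1))ᶜ := by simp [mem_before]
  simp only [codeAux, csiszarAux, mask_comp_update_of_notMem notMem_before,
    mask_comp_update_of_notMem notMem_compl]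

omit [DecidableEq Y2] in
theorem inv_mul_condEnt_messages :
    (n : ℝ)⁻¹ * condEnt (ch.codeLaw f1 f2) (fun ω i => (ω.2 i).1) (fun ω => ω.1)
      = condEnt (timeShare (Fin n) (ch.codeLaw f1 f2)) (fun z => (z.2.2 z.1).1)
          (fun z => (f1 z.2.1.1 z.2.1.2 z.1, f2 z.2.1.2 z.1)) := by
  rw [← condEnt_timeShare_mask_before]
  let τ (t : Fin n × (Fin M1 × Fin M2) × (Fin n → Option Y1)) : X1 × X2 :=
    (f1 t.2.1.1 t.2.1.2 t.1, f2 t.2.1.2 t.1)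
  have hlaw := ch.hasCondLaw_timeShare_codeLaw f1 f2
    (T := fun i ω => (i, ω.1, mask (before i) fun j => (ω.2 j).1)) (τ := τ)
    (fun i w y b => by
      rw [mask_comp_update_of_notMem (by simp [mem_before])])
    fun i ω => rfl
  exact (hlaw.map Prod.fst).condEnt_coarsen (K := fun x => lawOf (ch.kernel x) Prod.fst) (τ := τ)

theorem condEnt_input_codeAux :
    condEnt (timeShare (Fin n) (ch.codeLaw f1 f2)) (fun z => (z.2.2 z.1).1)
        (fun z => (f1 z.2.1.1 z.2.1.2 z.1, codeAux z))
      = condEnt (timeShare (Fin n) (ch.codeLaw f1 f2)) (fun z => (z.2.2 z.1).1)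
          (fun z => (f1 z.2.1.1 z.2.1.2 z.1, f2 z.2.1.2 z.1)) :=
  ((ch.hasCondLaw_codeAux f1 f2).map Prod.fst).condEnt_coarsen
    (K := fun x => lawOf (ch.kernel x) Prod.fst)
    (τ := fun t : X1 × CodeAux Y1 Y2 n M2 => (t.1, f2 t.2.2.1 t.2.1))

omit [DecidableEq Y2] in
theorem inv_mul_cmiRV_le :
    (n : ℝ)⁻¹ * cmiRV (ch.codeLaw f1 f2) (fun ω => ω.1.1) (fun ω i => (ω.2 i).1) (fun ω => ω.1.2)
      ≤ cmiRV (timeShare (Fin n) (ch.codeLaw f1 f2)) (fun z => f1 z.2.1.1 z.2.1.2 z.1)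
          (fun z => (z.2.2 z.1).1) (fun z => f2 z.2.1.2 z.1) := by
  rw [cmiRV_eq, cmiRV_eq, mul_sub, ← inv_mul_condEnt_messages]
  refine sub_le_sub_right (inv_mul_condEnt_le_condEnt_timeShare (ch.codeLaw_nonneg f1 f2)
    (V := fun ω => ω.1.2) (fun ω i => (ω.2 i).1) fun z z' h => ?_) _
  obtain ⟨hQ, hW2⟩ := Prod.mk.inj h
  rw [hQ, hW2]

omit [DecidableEq X1] [DecidableEq X2] [DecidableEq Y1] in
theorem inv_mul_entRV_le [NeZero M1] [NeZero M2] [NeZero n] :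
    (n : ℝ)⁻¹ * entRV (ch.codeLaw f1 f2) (fun ω i => (ω.2 i).2)
      ≤ entRV (timeShare (Fin n) (ch.codeLaw f1 f2)) (fun z => (z.2.2 z.1).2) := by
  have hμ1 := ch.sum_codeLaw f1 f2
  rw [← condEnt_unit hμ1, ← condEnt_unit (sum_timeShare hμ1)]
  exact inv_mul_condEnt_le_condEnt_timeShare (ch.codeLaw_nonneg f1 f2) _ fun _ _ _ => rfl

omit [DecidableEq X1] [DecidableEq X2] in
theorem inv_mul_miRV_le [NeZero M1] [NeZero M2] [NeZero n] :
    (n : ℝ)⁻¹ * miRV (ch.codeLaw f1 f2) (fun ω => ω.1.2) (fun ω i => (ω.2 i).2)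
      ≤ miRV (timeShare (Fin n) (ch.codeLaw f1 f2)) codeAux (fun z => (z.2.2 z.1).2) := by
  rw [miRV_eq, miRV_eq, mul_sub]
  exact sub_le_sub (ch.inv_mul_entRV_le f1 f2)
    (condEnt_csiszarAux_le (ch.codeLaw_nonneg f1 f2) (fun ω => ω.1.2) (fun ω i => (ω.2 i).1)
      fun ω i => (ω.2 i).2)

omit [DecidableEq X2] in
theorem inv_mul_cmiRV_add_miRV_le [NeZero M1] [NeZero M2] [NeZero n] :
    (n : ℝ)⁻¹ * cmiRV (ch.codeLaw f1 f2) (fun ω => ω.1.1) (fun ω i => (ω.2 i).1) (fun ω => ω.1.2)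
        + (n : ℝ)⁻¹ * miRV (ch.codeLaw f1 f2) (fun ω => ω.1.2) (fun ω i => (ω.2 i).2)
      ≤ cmiRV (timeShare (Fin n) (ch.codeLaw f1 f2)) (fun z => f1 z.2.1.1 z.2.1.2 z.1)
            (fun z => (z.2.2 z.1).1) codeAux
          + miRV (timeShare (Fin n) (ch.codeLaw f1 f2)) codeAux (fun z => (z.2.2 z.1).2) := by
  classical
  have csiszar := condEnt_csiszarAux_sub (ch.codeLaw f1 f2) (fun ω => ω.1.2)
    (fun ω i => (ω.2 i).1) fun ω i => (ω.2 i).2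
  have output2_le := ch.inv_mul_entRV_le f1 f2
  have output1_eq := ch.inv_mul_condEnt_messages f1 f2
  rw [cmiRV_eq, cmiRV_eq, miRV_eq, miRV_eq, condEnt_input_codeAux]
  unfold codeAux
  linarith

theorem mem_profileRegion_of_le [NeZero M1] [NeZero M2] [NeZero n] {R1 R2 : ℝ}
    (hR1 : R1 ≤ (n : ℝ)⁻¹ * cmiRV (ch.codeLaw f1 f2) (fun ω => ω.1.1) (fun ω i => (ω.2 i).1)
      (fun ω => ω.1.2))
    (hR2 : R2 ≤ (n : ℝ)⁻¹ * miRV (ch.codeLaw f1 f2) (fun ω => ω.1.2) (fun ω i => (ω.2 i).2)) :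
    (R1, R2) ∈ ch.profileRegion :=
  mem_profileRegion (x2 := fun v : CodeAux Y1 Y2 n M2 => f2 v.2.1 v.1)
    (timeShare_nonneg (ch.codeLaw_nonneg f1 f2))
    (sum_timeShare (ch.sum_codeLaw f1 f2)) (ch.hasCondLaw_codeAux f1 f2)
    (hR1.trans (ch.inv_mul_cmiRV_le f1 f2)) (hR2.trans (ch.inv_mul_miRV_le f1 f2))
    ((add_le_add hR1 hR2).trans (ch.inv_mul_cmiRV_add_miRV_le f1 f2))

end Code

theorem sub_fanoDefect_le_inv_mul {n : ℕ} [NeZero n] {ε R ℓ I : ℝ} (hε : 0 < ε) (hε1 : ε < 1)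
    (hR : R - ε ≤ ℓ / n) (hI : (1 - ε) * ℓ - fanoDefect ε ≤ I) :
    (1 - ε) * (R - ε) - fanoDefect ε ≤ (n : ℝ)⁻¹ * I := by
  have hn : (1 : ℝ) ≤ n := by exact_mod_cast NeZero.one_le
  have defect_le : (n : ℝ)⁻¹ * fanoDefect ε ≤ fanoDefect ε :=
    mul_le_of_le_one_left (fanoDefect_nonneg hε.le hε1.le) (inv_le_one_of_one_le₀ hn)
  calc (1 - ε) * (R - ε) - fanoDefect ε
      ≤ (1 - ε) * (ℓ / n) - (n : ℝ)⁻¹ * fanoDefect ε :=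
        sub_le_sub (mul_le_mul_of_nonneg_left hR (by linarith)) defect_le
    _ = (n : ℝ)⁻¹ * ((1 - ε) * ℓ - fanoDefect ε) := by ring
    _ ≤ (n : ℝ)⁻¹ * I := by gcongr

variable {ch : DMIFC X1 X2 Y1 Y2}

theorem mem_profileRegion_of_achievable {R : ℝ × ℝ} (hR : AchievableT1 ch R.1 R.2) :
    R ∈ ch.profileRegion := by
  have tendsto_sub (r : ℝ) : Filter.Tendsto (fun ε => (1 - ε) * (r - ε) - fanoDefect ε)
      (nhdsWithin 0 (Set.Ioi 0)) (nhds r) := by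
    have hcont : Continuous fun ε : ℝ => (1 - ε) * (r - ε) := by fun_prop
    simpa using ((hcont.tendsto 0).sub tendsto_fanoDefect).mono_left nhdsWithin_le_nhds
  refine ch.isClosed_profileRegion.mem_of_tendsto
    ((tendsto_sub R.1).prodMk_nhds (tendsto_sub R.2)) ?_
  filter_upwards [Ioo_mem_nhdsGT zero_lt_one] with ε hε
  obtain ⟨n, M1, M2, f1, f2, g1, g2, hn, hM1, hM2, hR1, hR2, herr1, herr2⟩ := hR ε hε.1
  have := NeZero.of_pos hn
  have := NeZero.of_pos hM1
  have := NeZero.of_pos hM2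
  exact ch.mem_profileRegion_of_le f1 f2
    (sub_fanoDefect_le_inv_mul hε.1 hε.2 hR1 (ch.fano_message1 f1 f2 g1 hε.1 hε.2 herr1))
    (sub_fanoDefect_le_inv_mul hε.1 hε.2 hR2 (ch.fano_message2 f1 f2 g2 hε.1 hε.2 herr2))

end DMIFC

/-- **Theorem 2 (outer bound).**  For every two-user discrete memoryless interference
channel with degraded message sets in which transmitter 1 knows both messages, the
capacity region satisfies `C^{T₁}_{IFC} ⊆ ℛ_o`. -/
theorem capacityT1_subset_Ro (ch : DMIFC X1 X2 Y1 Y2) : CapacityT1 ch ⊆ Ro ch := by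
  calc CapacityT1 ch
      ⊆ ch.profileRegion :=
        closure_minimal (fun _ hR => DMIFC.mem_profileRegion_of_achievable hR)
          ch.isClosed_profileRegion
    _ ⊆ Ro ch := ch.profileRegion_subset_Ro
end
end

section
/- (Csiszár sum identity) Let (Y_{1,1},…,Y_{1,n}), (Y_{2,1},…,Y_{2,n}) and T be jointly distributed finite-valued random variables. Then ∑_{i=1}^n I(Y_{2,i+1}ⁿ ; Y_{1,i} | Y₁^{i−1}, T) = ∑_{i=1}^n I(Y₁^{i−1} ; Y_{2,i} | Y_{2,i+1}ⁿ, T), where Y₁^{i−1} = (Y_{1,1},…,Y_{1,i−1}) and Y_{2,i+1}ⁿ = (Y_{2,i+1},…,Y_{2,n}), with the conventions that Y₁⁰ and Y_{2,n+1}ⁿ are empty (conditioning on or arguments equal to an empty tuple give the degenerate constant random variable). -/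
open scoped BigOperators

noncomputable section

/-!
Put `Φ(s) = I(Y₁ˢ ; Y₂^{sᶜ} | T)` for a set `s` of indices. By the chain rule,
`I(Y₁^i ; Y_{2,i+1}ⁿ | T)` exceeds `I(Y₁^{i-1} ; Y_{2,i+1}ⁿ | T)` by the `i`-th term on the left of
the identity, and `I(Y₁^{i-1} ; Y_{2,i}ⁿ | T)` exceeds it by the `i`-th term on the right. Hence
the difference of the two terms is `Φ({1,…,i}) - Φ({1,…,i-1})`, and the sum telescopes to
`Φ({1,…,n}) - Φ(∅) = 0`. Tuples may be regrouped freely in all this, since the entropy of a random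
variable depends only on the partition (`Setoid.ker`) it induces on the sample space.
-/

section Entropy

variable {Ω A : Type*} [Fintype Ω] [Fintype A] [DecidableEq A]

theorem entRV_eq_neg_sum (μ : Ω → ℝ) (f : Ω → A) :
    entRV μ f = -∑ ω, μ ω * Real.logb 2 (lawOf μ f (f ω)) := by
  have mul_logb_eq_sum (a : A) : lawOf μ f a * Real.logb 2 (lawOf μ f a) =
      ∑ ω, if f ω = a then μ ω * Real.logb 2 (lawOf μ f (f ω)) else 0 := by
    nth_rw 1 [lawOf]
    rw [Finset.sum_mul]
    refine Finset.sum_congr rfl fun ω _ => ?_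
    split_ifs with h
    · rw [h]
    · exact zero_mul _
  simp only [entRV, ent, mul_logb_eq_sum]
  rw [Finset.sum_comm]
  simp only [Finset.sum_ite_eq, Finset.mem_univ, if_true]

theorem entRV_congr_s7 {A' : Type*} [Fintype A'] [DecidableEq A'] (μ : Ω → ℝ) {f : Ω → A}
    {f' : Ω → A'} (h : Setoid.ker f = Setoid.ker f') : entRV μ f = entRV μ f' := by
  have eq_iff (x y : Ω) : f x = f y ↔ f' x = f' y :=
    Setoid.ext_iff.mp h x y
  simp only [entRV_eq_neg_sum, lawOf, eq_iff]

end Entropy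

theorem ker_prodMk {Ω A B : Type*} (f : Ω → A) (g : Ω → B) :
    Setoid.ker (fun ω => (f ω, g ω)) = Setoid.ker f ⊓ Setoid.ker g :=
  Setoid.ext fun _ _ => Prod.mk_inj

section ConditionalMutualInformation

variable {Ω A B C D : Type*} [Fintype Ω] [Fintype A] [Fintype B] [Fintype C] [Fintype D]
  [DecidableEq A] [DecidableEq B] [DecidableEq C] [DecidableEq D]

theorem cmiRV_congr {A' B' C' : Type*} [Fintype A'] [Fintype B'] [Fintype C']
    [DecidableEq A'] [DecidableEq B'] [DecidableEq C'] (μ : Ω → ℝ)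
    {f : Ω → A} {f' : Ω → A'} {g : Ω → B} {g' : Ω → B'} {h : Ω → C} {h' : Ω → C'}
    (hf : Setoid.ker f = Setoid.ker f') (hg : Setoid.ker g = Setoid.ker g')
    (hh : Setoid.ker h = Setoid.ker h') : cmiRV μ f g h = cmiRV μ f' g' h' := by
  unfold cmiRV
  refine congrArg₂ (· - ·) (congrArg₂ (· - ·) (congrArg₂ (· + ·) ?_ ?_) ?_) ?_ <;>
    exact entRV_congr_s7 μ (by simp only [ker_prodMk, hf, hg, hh])

theorem cmiRV_comm (μ : Ω → ℝ) (f : Ω → A) (g : Ω → B) (h : Ω → C) :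
    cmiRV μ f g h = cmiRV μ g f h := by
  have swap : entRV μ (fun ω => (f ω, g ω, h ω)) = entRV μ (fun ω => (g ω, f ω, h ω)) :=
    entRV_congr_s7 μ (by simp only [ker_prodMk, inf_left_comm])
  unfold cmiRV
  rw [swap]
  ring

theorem cmiRV_prodMk_right (μ : Ω → ℝ) (f : Ω → A) (g : Ω → B) (h : Ω → C) (k : Ω → D) :
    cmiRV μ f (fun ω => (g ω, h ω)) k =
      cmiRV μ f h k + cmiRV μ f g (fun ω => (h ω, k ω)) := by
  have assoc : entRV μ (fun ω => ((g ω, h ω), k ω)) = entRV μ (fun ω => (g ω, h ω, k ω)) :=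
    entRV_congr_s7 μ (by simp only [ker_prodMk, inf_assoc])
  have assoc_joint : entRV μ (fun ω => (f ω, (g ω, h ω), k ω)) =
      entRV μ (fun ω => (f ω, g ω, h ω, k ω)) :=
    entRV_congr_s7 μ (by simp only [ker_prodMk, inf_assoc])
  unfold cmiRV
  rw [assoc, assoc_joint]
  ring

theorem cmiRV_of_subsingleton_left [Subsingleton A] (μ : Ω → ℝ) (f : Ω → A) (g : Ω → B)
    (h : Ω → C) : cmiRV μ f g h = 0 := by
  have ker_f : Setoid.ker f = ⊤ := Setoid.ext fun _ _ => iff_of_true (Subsingleton.elim _ _) trivial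
  have drop : entRV μ (fun ω => (f ω, h ω)) = entRV μ h :=
    entRV_congr_s7 μ (by rw [ker_prodMk, ker_f, top_inf_eq])
  have drop_joint : entRV μ (fun ω => (f ω, g ω, h ω)) = entRV μ (fun ω => (g ω, h ω)) :=
    entRV_congr_s7 μ (by rw [ker_prodMk, ker_f, top_inf_eq])
  unfold cmiRV
  rw [drop, drop_joint]
  ring

end ConditionalMutualInformation

section Blocks

variable {Ω ι : Type*} {A : ι → Type*}

theorem ker_restrict_insert [DecidableEq ι] (Y : ∀ i, Ω → A i) (i : ι) (s : Finset ι) :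
    Setoid.ker (fun ω => (insert i s).restrict (Y · ω)) =
      Setoid.ker (fun ω => (Y i ω, s.restrict (Y · ω))) :=
  Setoid.ext fun x y => by
    simp [Setoid.ker_def, funext_iff]

theorem ker_comp_eq_ker_restrict {κ : Type*} (Y : ∀ i, Ω → A i) {s : Finset ι} {e : κ → ι}
    (he : Set.range e = s) :
    Setoid.ker (fun ω j => Y (e j) ω) = Setoid.ker (fun ω => s.restrict (Y · ω)) :=
  Setoid.ext fun x y => by
    simp [Setoid.ker_def, funext_iff, ← Finset.mem_coe, ← he]

theorem cmiRV_restrict_insert_right {B C : Type*} [DecidableEq ι] [Fintype Ω] [Fintype B]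
    [∀ i, Fintype (A i)] [Fintype C] [DecidableEq B] [∀ i, DecidableEq (A i)] [DecidableEq C]
    (μ : Ω → ℝ) (f : Ω → B) (Y : ∀ i, Ω → A i) (i : ι) (s : Finset ι) (h : Ω → C) :
    cmiRV μ f (fun ω => (insert i s).restrict (Y · ω)) h =
      cmiRV μ f (fun ω => s.restrict (Y · ω)) h +
        cmiRV μ f (Y i) (fun ω => (s.restrict (Y · ω), h ω)) := by
  rw [← cmiRV_prodMk_right]
  exact cmiRV_congr μ rfl (ker_restrict_insert Y i s) rfl

end Blocks

theorem sum_Iic_sub_Iio {ι M : Type*} [LinearOrder ι] [Fintype ι] [LocallyFiniteOrderBot ι]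
    [AddCommGroup M] (F : Finset ι → M) :
    ∑ i, (F (Finset.Iic i) - F (Finset.Iio i)) = F Finset.univ - F ∅ := by
  suffices h : ∀ s : Finset ι, ∑ i ∈ s, (F {j ∈ s | j ≤ i} - F {j ∈ s | j < i}) = F s - F ∅ by
    simpa only [Finset.filter_ge_eq_Iic, Finset.filter_gt_eq_Iio] using h Finset.univ
  intro s
  induction s using Finset.induction_on_max with
  | empty => simp
  | insert a s ha ih =>
    have a_notMem : a ∉ s := fun h => (ha a h).false
    have le_a : {j ∈ insert a s | j ≤ a} = insert a s := by grind
    have lt_a : {j ∈ insert a s | j < a} = s := by grind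
    have earlier (i : ι) (hi : i ∈ s) : F {j ∈ insert a s | j ≤ i} - F {j ∈ insert a s | j < i} =
        F {j ∈ s | j ≤ i} - F {j ∈ s | j < i} := by
      rw [Finset.filter_insert, Finset.filter_insert, if_neg (ha i hi).not_ge,
        if_neg (ha i hi).not_gt]
    rw [Finset.sum_insert a_notMem, le_a, lt_a, Finset.sum_congr rfl earlier, ih,
      sub_add_sub_cancel]

theorem sum_Iic_Ioi_sub_Iio_Ici {ι M : Type*} [LinearOrder ι] [Fintype ι] [LocallyFiniteOrderBot ι]
    [LocallyFiniteOrderTop ι] [AddCommGroup M] (F : Finset ι → Finset ι → M) :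
    ∑ i, (F (Finset.Iic i) (Finset.Ioi i) - F (Finset.Iio i) (Finset.Ici i)) =
      F Finset.univ ∅ - F ∅ Finset.univ := by
  have compl_Iic (i : ι) : (Finset.Iic i)ᶜ = Finset.Ioi i := by ext; simp
  have compl_Iio (i : ι) : (Finset.Iio i)ᶜ = Finset.Ici i := by ext; simp
  simpa only [compl_Iic, compl_Iio, Finset.compl_univ, Finset.compl_empty] using
    sum_Iic_sub_Iio fun s => F s sᶜ

theorem csiszar_sum_identity_general {Ω ι T : Type*} {A B : ι → Type*} [Fintype Ω]
    [LinearOrder ι] [Fintype ι] [LocallyFiniteOrderBot ι] [LocallyFiniteOrderTop ι]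
    [∀ i, Fintype (A i)] [∀ i, Fintype (B i)] [Fintype T]
    [∀ i, DecidableEq (A i)] [∀ i, DecidableEq (B i)] [DecidableEq T]
    (μ : Ω → ℝ) (Y1 : ∀ i, Ω → A i) (Y2 : ∀ i, Ω → B i) (Tv : Ω → T) :
    ∑ i, cmiRV μ (fun ω => (Finset.Ioi i).restrict (Y2 · ω)) (Y1 i)
        (fun ω => ((Finset.Iio i).restrict (Y1 · ω), Tv ω)) =
      ∑ i, cmiRV μ (fun ω => (Finset.Iio i).restrict (Y1 · ω)) (Y2 i)
        (fun ω => ((Finset.Ioi i).restrict (Y2 · ω), Tv ω)) := by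
  let I (s t : Finset ι) : ℝ :=
    cmiRV μ (fun ω => s.restrict (Y1 · ω)) (fun ω => t.restrict (Y2 · ω)) Tv
  have I_empty_left (t : Finset ι) : I ∅ t = 0 := cmiRV_of_subsingleton_left ..
  have I_empty_right (s : Finset ι) : I s ∅ = 0 :=
    (cmiRV_comm ..).trans (cmiRV_of_subsingleton_left ..)
  have term_left (i : ι) : cmiRV μ (fun ω => (Finset.Ioi i).restrict (Y2 · ω)) (Y1 i)
      (fun ω => ((Finset.Iio i).restrict (Y1 · ω), Tv ω)) =
        I (Finset.Iic i) (Finset.Ioi i) - I (Finset.Iio i) (Finset.Ioi i) := by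
    simp only [I, cmiRV_comm μ _ (fun ω => (Finset.Ioi i).restrict (Y2 · ω))]
    rw [← Finset.Iio_insert, cmiRV_restrict_insert_right, add_sub_cancel_left]
  have term_right (i : ι) : cmiRV μ (fun ω => (Finset.Iio i).restrict (Y1 · ω)) (Y2 i)
      (fun ω => ((Finset.Ioi i).restrict (Y2 · ω), Tv ω)) =
        I (Finset.Iio i) (Finset.Ici i) - I (Finset.Iio i) (Finset.Ioi i) := by
    simp only [I]
    rw [← Finset.Ioi_insert, cmiRV_restrict_insert_right, add_sub_cancel_left]
  simp only [term_left, term_right]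
  rw [← sub_eq_zero, ← Finset.sum_sub_distrib]
  simp only [sub_sub_sub_cancel_right, sum_Iic_Ioi_sub_Iio_Ici, I_empty_left, I_empty_right,
    sub_self]

section FinBlocks

variable {Ω : Type*} {n : ℕ} {A : Fin n → Type*}

theorem ker_prefix_eq_ker_restrict_Iio (Y : ∀ i, Ω → A i) (i : Fin n) :
    Setoid.ker (fun ω (j : Fin i) => Y ⟨j, j.2.trans i.2⟩ ω) =
      Setoid.ker (fun ω => (Finset.Iio i).restrict (Y · ω)) :=
  ker_comp_eq_ker_restrict Y <| (Fin.range_castLE i.2.le).trans (Finset.coe_Iio i).symm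

theorem ker_suffix_eq_ker_restrict_Ioi (Y : ∀ i, Ω → A i) (i : Fin n) :
    Setoid.ker (fun ω (j : Fin (n - (i + 1))) => Y ⟨i + 1 + j, by omega⟩ ω) =
      Setoid.ker (fun ω => (Finset.Ioi i).restrict (Y · ω)) :=
  ker_comp_eq_ker_restrict Y <| by
    ext k
    simp only [Set.mem_range, Fin.ext_iff, Finset.coe_Ioi, Set.mem_Ioi, Fin.lt_def]
    exact ⟨fun ⟨j, hj⟩ => by omega, fun hk => ⟨⟨k - (i + 1), by omega⟩, by simp only; omega⟩⟩

end FinBlocks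

/-- **Csiszár sum identity.**  For jointly distributed finite-valued random vectors
`Y₁ⁿ`, `Y₂ⁿ` and a random variable `T`,
`∑ᵢ I(Y_{2,i+1}ⁿ ; Y_{1,i} | Y₁^{i-1}, T) = ∑ᵢ I(Y₁^{i-1} ; Y_{2,i} | Y_{2,i+1}ⁿ, T)`. -/
theorem csiszar_sum_identity {Ω A B T : Type*} [Fintype Ω] [Fintype A] [Fintype B] [Fintype T]
    [DecidableEq A] [DecidableEq B] [DecidableEq T]
    (μ : Ω → ℝ) (hμ0 : ∀ ω, 0 ≤ μ ω) (hμ1 : ∑ ω, μ ω = 1)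
    (n : ℕ) (Y1 : Fin n → Ω → A) (Y2 : Fin n → Ω → B) (Tv : Ω → T) :
    ∑ i : Fin n,
        cmiRV μ
          (fun ω => fun j : Fin (n - (i.1 + 1)) =>
            Y2 ⟨i.1 + 1 + j.1, by have := j.2; have := i.2; omega⟩ ω)
          (fun ω => Y1 i ω)
          (fun ω => ((fun j : Fin i.1 => Y1 ⟨j.1, by have := j.2; have := i.2; omega⟩ ω), Tv ω))
      = ∑ i : Fin n,
        cmiRV μ
          (fun ω => fun j : Fin i.1 => Y1 ⟨j.1, by have := j.2; have := i.2; omega⟩ ω)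
          (fun ω => Y2 i ω)
          (fun ω => ((fun j : Fin (n - (i.1 + 1)) =>
            Y2 ⟨i.1 + 1 + j.1, by have := j.2; have := i.2; omega⟩ ω), Tv ω)) := by
  convert csiszar_sum_identity_general μ Y1 Y2 Tv using 3 with i _ i _
  · exact cmiRV_congr μ (ker_suffix_eq_ker_restrict_Ioi Y2 i) rfl
      (by simp only [ker_prodMk, ker_prefix_eq_ker_restrict_Iio Y1])
  · exact cmiRV_congr μ (ker_prefix_eq_ker_restrict_Iio Y1 i) rfl
      (by simp only [ker_prodMk, ker_suffix_eq_ker_restrict_Ioi Y2])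
end
end

section
/- Let X = (X₁,…,X_k) be an arbitrary zero-mean real random vector with covariance matrix K that admits a joint density with well-defined finite differential entropies, let S ⊆ {1,…,k} with complement S̄, and let X* = (X₁*,…,X_k*) be a centered Gaussian vector with the same covariance matrix K. Then h(X_S | X_{S̄}) ≤ h(X*_S | X*_{S̄}). -/
open scoped BigOperators
open MeasureTheory ProbabilityTheory

noncomputable section

/-- Differential entropy (base 2) of a measure `ν` with respect to a reference
measure `vol` (Lebesgue measure below), computed from the Radon–Nikodym density:
`h(ν) = -∫ f log₂ f d(vol)` where `f = dν/d(vol)`. -/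
def dH {E : Type*} [MeasurableSpace E] (vol ν : Measure E) : ℝ :=
  -∫ x, (ν.rnDeriv vol x).toReal * Real.logb 2 (ν.rnDeriv vol x).toReal ∂vol

/-- The measure `ν` admits a density with a well-defined finite differential entropy. -/
def HasFiniteDH {E : Type*} [MeasurableSpace E] (vol ν : Measure E) : Prop :=
  ν ≪ vol ∧
    Integrable (fun x => (ν.rnDeriv vol x).toReal * Real.logb 2 (ν.rnDeriv vol x).toReal) vol

/-!
Let `f` be the linear map `(x_S, x_S̄) ↦ x_S̄`. By the chain rule for log-likelihood ratios, the
data-processing inequality `D(f X ‖ f X*) ≤ D(X ‖ X*)` is a conditional Gibbs inequality: the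
conditional entropy of `X` is at most the cross entropy in which the conditional density of `X`
inside the logarithm is replaced by that of `X*`. The logarithms of the densities of `X*` and `f X*`
are constants minus quadratic forms, so their integrals depend only on the second moments and are
the same under `X` as under `X*`; hence this cross entropy is the conditional entropy of `X*`.
-/

section RelativeEntropy

variable {E F : Type*} [MeasurableSpace E] [MeasurableSpace F]
  {v P Q : Measure E} {w : Measure F} {f : E → F}

lemma dH_eq_neg_integral_llr_div_log_two [SigmaFinite v] [SigmaFinite P] (hPv : P ≪ v) :
    dH v P = -(∫ x, llr P v x ∂P) / Real.log 2 := by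
  rw [dH, integral_toReal_rnDeriv_mul hPv, neg_div, ← integral_div]
  rfl

lemma HasFiniteDH.integrable_llr [SigmaFinite v] [SigmaFinite P] (h : HasFiniteDH v P) :
    Integrable (llr P v) P := by
  have hlogb : Integrable (fun x => Real.logb 2 (P.rnDeriv v x).toReal) P :=
    (integrable_toReal_rnDeriv_mul_iff h.1).1 h.2
  have hlog_two : Real.log 2 ≠ 0 := (Real.log_pos one_lt_two).ne'
  refine (hlogb.mul_const (Real.log 2)).congr (.of_forall fun x => ?_)
  exact div_mul_cancel₀ _ hlog_two

lemma llr_ae_eq_add_llr [SigmaFinite v] [SigmaFinite P] [SigmaFinite Q]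
    (hPQ : P ≪ Q) (hQv : Q ≪ v) : llr P v =ᵐ[P] llr P Q + llr Q v := by
  filter_upwards [(hPQ.trans hQv).ae_le (Measure.rnDeriv_mul_rnDeriv (κ := v) hPQ),
    exp_llr_of_ac P Q hPQ, hPQ.ae_le (exp_llr_of_ac Q v hQv)] with x hchain hexpP hexpQ
  rw [llr, ← hchain, Pi.mul_apply, ENNReal.toReal_mul, ← hexpP, ← hexpQ, ← Real.exp_add,
    Real.log_exp, Pi.add_apply]

lemma integrable_llr_of_integrable_llr_of_integrable_llr [SigmaFinite v] [SigmaFinite P]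
    [SigmaFinite Q] (hPQ : P ≪ Q) (hQv : Q ≪ v) (hPint : Integrable (llr P v) P)
    (hQint : Integrable (llr Q v) P) : Integrable (llr P Q) P := by
  refine (hPint.sub hQint).congr ?_
  filter_upwards [llr_ae_eq_add_llr hPQ hQv] with x hx
  simp [hx]

lemma integral_llr_eq_integral_llr_add_integral_llr [SigmaFinite v] [SigmaFinite P]
    [SigmaFinite Q] (hPQ : P ≪ Q) (hQv : Q ≪ v) (hPQint : Integrable (llr P Q) P)
    (hQint : Integrable (llr Q v) P) :
    ∫ x, llr P v x ∂P = ∫ x, llr P Q x ∂P + ∫ x, llr Q v x ∂P := by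
  rw [integral_congr_ae (llr_ae_eq_add_llr hPQ hQv)]
  exact integral_add hPQint hQint

open InformationTheory in
lemma integral_llr_map_le [IsProbabilityMeasure P] [IsProbabilityMeasure Q] (hPQ : P ≪ Q)
    (hf : Measurable f) (hintegrable : Integrable (llr P Q) P) :
    ∫ y, llr (P.map f) (Q.map f) y ∂P.map f ≤ ∫ x, llr P Q x ∂P := by
  have := Measure.isProbabilityMeasure_map (μ := P) hf.aemeasurable
  have := Measure.isProbabilityMeasure_map (μ := Q) hf.aemeasurable
  rw [← toReal_klDiv_of_measure_eq (hPQ.map hf) (by simp only [measure_univ]),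
    ← toReal_klDiv_of_measure_eq hPQ (by simp only [measure_univ])]
  exact ENNReal.toReal_mono (klDiv_ne_top hPQ hintegrable) (klDiv_map_le P Q hf)

lemma integral_llr_map_sub_integral_llr_map_le [SigmaFinite v] [SigmaFinite w]
    [IsProbabilityMeasure P] [IsProbabilityMeasure Q] (hPQ : P ≪ Q) (hQv : Q ≪ v)
    (hf : Measurable f) (hQw : Q.map f ≪ w) (hPint : Integrable (llr P v) P)
    (hQint : Integrable (llr Q v) P) (hQint_map : Integrable (llr (Q.map f) w) (P.map f)) :
    ∫ y, llr (P.map f) w y ∂P.map f - ∫ y, llr (Q.map f) w y ∂P.map f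
      ≤ ∫ x, llr P v x ∂P - ∫ x, llr Q v x ∂P := by
  have := Measure.isProbabilityMeasure_map (μ := P) hf.aemeasurable
  have := Measure.isProbabilityMeasure_map (μ := Q) hf.aemeasurable
  have hPQint := integrable_llr_of_integrable_llr_of_integrable_llr hPQ hQv hPint hQint
  have hPQint_map : Integrable (llr (P.map f) (Q.map f)) (P.map f) :=
    InformationTheory.integrable_llr_map hPQ hf hPQint
  rw [integral_llr_eq_integral_llr_add_integral_llr hPQ hQv hPQint hQint,
    integral_llr_eq_integral_llr_add_integral_llr (hPQ.map hf) hQw hPQint_map hQint_map,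
    add_sub_cancel_right, add_sub_cancel_right]
  exact integral_llr_map_le hPQ hf hPQint

end RelativeEntropy

section SecondMoments

variable {E F : Type*}
  [NormedAddCommGroup E] [NormedSpace ℝ E] [MeasurableSpace E]
  [NormedAddCommGroup F] [NormedSpace ℝ F] [MeasurableSpace F]
  {P G : Measure E}

/-- `P` is square integrable and its second moments about the mean of `G` are the covariances of
`G`, tested on linear functionals. Second moments are taken about the mean of `G`, so that `P` need
not have the same mean as `G`. -/
structure MatchesCovariance (P G : Measure E) : Prop where
  memLp_two (L : StrongDual ℝ E) : MemLp L 2 P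
  integral_sq_sub (L : StrongDual ℝ E) : ∫ x, (L x - G[L]) ^ 2 ∂P = Var[L; G]

lemma MatchesCovariance.integrable_sq_sub [IsFiniteMeasure P] (h : MatchesCovariance P G)
    (L : StrongDual ℝ E) : Integrable (fun x => (L x - G[L]) ^ 2) P :=
  ((h.memLp_two L).sub (memLp_const _)).integrable_sq

lemma MatchesCovariance.integrable_sub_sum_sq_div [IsFiniteMeasure P] (h : MatchesCovariance P G)
    {ι : Type*} [Fintype ι] (a : ℝ) (L : ι → StrongDual ℝ E) (r : ι → ℝ) :
    Integrable (fun x => a - ∑ i, (L i x - G[L i]) ^ 2 / r i) P :=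
  (integrable_const a).sub <|
    integrable_finsetSum _ fun i _ => (h.integrable_sq_sub (L i)).div_const (r i)

lemma MatchesCovariance.integral_sub_sum_sq_div [IsProbabilityMeasure P]
    (h : MatchesCovariance P G) {ι : Type*} [Fintype ι] (a : ℝ) (L : ι → StrongDual ℝ E)
    (r : ι → ℝ) :
    ∫ x, (a - ∑ i, (L i x - G[L i]) ^ 2 / r i) ∂P = a - ∑ i, Var[L i; G] / r i := by
  have hterm (i) : Integrable (fun x => (L i x - G[L i]) ^ 2 / r i) P :=
    (h.integrable_sq_sub (L i)).div_const (r i)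
  rw [integral_sub (integrable_const a) (integrable_finsetSum _ fun i _ => hterm i),
    integral_finsetSum _ fun i _ => hterm i, integral_const, probReal_univ, one_smul]
  simp only [integral_div, h.integral_sq_sub]

lemma MatchesCovariance.ae_eq_of_variance_eq_zero [IsFiniteMeasure P] (h : MatchesCovariance P G)
    {L : StrongDual ℝ E} (hL : Var[L; G] = 0) : ∀ᵐ x ∂P, L x = G[L] := by
  have hzero : (fun x => (L x - G[L]) ^ 2) =ᵐ[P] 0 :=
    (integral_eq_zero_iff_of_nonneg (fun _ => sq_nonneg _) (h.integrable_sq_sub L)).1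
      ((h.integral_sq_sub L).trans hL)
  filter_upwards [hzero] with x hx
  exact sub_eq_zero.1 (pow_eq_zero_iff two_ne_zero |>.1 hx)

variable [BorelSpace E]

lemma MatchesCovariance.refl (G : Measure E) [IsGaussian G] : MatchesCovariance G G where
  memLp_two L := IsGaussian.memLp_dual G L 2 (by simp)
  integral_sq_sub _ := (variance_eq_integral (by fun_prop)).symm

lemma MatchesCovariance.of_map_eq_gaussianReal (hP : ∀ L : StrongDual ℝ E, MemLp L 2 P)
    (hG : ∀ L : StrongDual ℝ E, G.map L = gaussianReal 0 (∫ x, L x ^ 2 ∂P).toNNReal) :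
    MatchesCovariance P G where
  memLp_two := hP
  integral_sq_sub L := by
    have hL : AEMeasurable L G := by fun_prop
    have hmean : G[L] = 0 := by
      rw [← integral_id_gaussianReal (μ := 0), ← hG L, integral_map hL (by fun_prop)]
    rw [hmean, ← variance_id_map hL, hG L, variance_id_gaussianReal,
      Real.coe_toNNReal _ (integral_nonneg fun x => sq_nonneg (L x))]
    simp only [sub_zero]

lemma MatchesCovariance.map [BorelSpace F] (h : MatchesCovariance P G) (f : E →L[ℝ] F) :
    MatchesCovariance (P.map f) (G.map f) where
  memLp_two L := by
    rw [memLp_map_measure_iff (by fun_prop) (by fun_prop)]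
    exact h.memLp_two (L.comp f)
  integral_sq_sub L := by
    rw [integral_map (by fun_prop) (by fun_prop), integral_map (by fun_prop) (by fun_prop),
      variance_map (by fun_prop) (by fun_prop)]
    exact h.integral_sq_sub (L.comp f)

end SecondMoments

section AbsolutelyContinuous

variable {E F : Type*}
  [NormedAddCommGroup E] [NormedSpace ℝ E] [FiniteDimensional ℝ E] [MeasurableSpace E]
  [BorelSpace E]
  [NormedAddCommGroup F] [NormedSpace ℝ F] [MeasurableSpace F] [BorelSpace F]
  {v P G : Measure E} [v.IsAddHaarMeasure] {w : Measure F} [w.IsAddHaarMeasure]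

lemma map_absolutelyContinuous_of_surjective {f : E →L[ℝ] F} (hf : Function.Surjective f)
    (hPv : P ≪ v) : P.map f ≪ w := by
  obtain ⟨c, -, hc⟩ := (f : E →ₗ[ℝ] F).exists_map_addHaar_eq_smul_addHaar v w hf
  have hvw : v.map f ≪ w := by
    rw [← ContinuousLinearMap.coe_coe, hc]
    exact Measure.smul_absolutelyContinuous
  exact (hPv.map f.measurable).trans hvw

lemma MatchesCovariance.variance_ne_zero [IsProbabilityMeasure P] (h : MatchesCovariance P G)
    (hPv : P ≪ v) {L : StrongDual ℝ E} (hL : L ≠ 0) : Var[L; G] ≠ 0 := by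
  intro hvar
  have hsurj : Function.Surjective L := LinearMap.surjective_of_ne_zero (mod_cast hL)
  have hac : P.map L ≪ volume := map_absolutelyContinuous_of_surjective hsurj hPv
  have hne : ∀ᵐ x ∂P, L x ≠ G[L] :=
    ae_of_ae_map L.measurable.aemeasurable (hac.ae_le (Measure.ae_ne volume _))
  have hfalse : ∀ᵐ _ ∂P, False := by
    filter_upwards [h.ae_eq_of_variance_eq_zero hvar, hne] with x heq hne using hne heq
  exact hfalse.exists.choose_spec

end AbsolutelyContinuous

section GaussianDensity

lemma log_gaussianPDFReal (m : ℝ) {v : NNReal} (hv : v ≠ 0) (x : ℝ) :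
    Real.log (gaussianPDFReal m v x) =
      -Real.log √(2 * Real.pi * v) - (x - m) ^ 2 / (2 * v) := by
  have hsqrt : (√(2 * Real.pi * v))⁻¹ ≠ 0 := by positivity
  rw [gaussianPDFReal, Real.log_mul hsqrt (Real.exp_ne_zero _), Real.log_inv, Real.log_exp,
    neg_div, ← sub_eq_add_neg]

lemma toNNReal_variance_ne_zero {Ω : Type*} [MeasurableSpace Ω] {μ : Measure Ω} {X : Ω → ℝ}
    (hX : Var[X; μ] ≠ 0) : Var[X; μ].toNNReal ≠ 0 :=
  (Real.toNNReal_pos.2 ((variance_nonneg X μ).lt_of_ne' hX)).ne'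

lemma pi_withDensity_ofReal {ι : Type*} [Fintype ι] {α : ι → Type*} [∀ i, MeasurableSpace (α i)]
    {μ : ∀ i, Measure (α i)} [∀ i, SigmaFinite (μ i)] {f : ∀ i, α i → ℝ}
    (hf_nonneg : ∀ i x, 0 ≤ f i x) (hf_int : ∀ i, Integrable (f i) (μ i)) :
    Measure.pi (fun i => (μ i).withDensity fun x => ENNReal.ofReal (f i x))
      = (Measure.pi μ).withDensity fun x => ENNReal.ofReal (∏ i, f i (x i)) := by
  have := fun i => isFiniteMeasure_withDensity_ofReal (hf_int i).hasFiniteIntegral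
  refine Measure.pi_eq fun s hs => ?_
  calc (Measure.pi μ).withDensity (fun x => ENNReal.ofReal (∏ i, f i (x i))) (Set.univ.pi s)
      = ∫⁻ x, ENNReal.ofReal (∏ i, f i (x i)) ∂Measure.pi fun i => (μ i).restrict (s i) := by
        rw [withDensity_apply _ (.univ_pi hs), Measure.restrict_pi_pi]
    _ = ENNReal.ofReal (∏ i, ∫ x in s i, f i x ∂μ i) := by
        rw [← integral_fintype_prod_eq_prod, ofReal_integral_eq_lintegral_ofReal
          (.fintype_prod_dep fun i => (hf_int i).restrict)
          (.of_forall fun x => Finset.prod_nonneg fun i _ => hf_nonneg i (x i))]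
    _ = ∏ i, (μ i).withDensity (fun x => ENNReal.ofReal (f i x)) (s i) := by
        rw [ENNReal.ofReal_prod_of_nonneg fun i _ => integral_nonneg (hf_nonneg i)]
        refine Finset.prod_congr rfl fun i _ => ?_
        rw [withDensity_apply _ (hs i), ofReal_integral_eq_lintegral_ofReal (hf_int i).restrict
          (.of_forall (hf_nonneg i))]

lemma eq_withDensity_comp_of_map_eq {α β : Type*} [MeasurableSpace α] [MeasurableSpace β]
    {μ ν : Measure α} (e : α ≃ᵐ β) {g : β → ENNReal} (hg : Measurable g)
    (h : μ.map e = (ν.map e).withDensity g) : μ = ν.withDensity (g ∘ e) := by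
  refine MeasurableEquiv.map_measurableEquiv_injective e (h.trans ?_)
  ext s hs
  rw [withDensity_apply _ hs, Measure.map_apply e.measurable hs,
    withDensity_apply _ (e.measurable hs), setLIntegral_map hs hg e.measurable]
  rfl

variable {E : Type*} [NormedAddCommGroup E] [NormedSpace ℝ E]

lemma map_eq_withDensity_prod_gaussianPDFReal {ι : Type*} [Fintype ι] [MeasurableSpace E]
    [BorelSpace E] {G : Measure E} [IsGaussian G] {L : ι → StrongDual ℝ E}
    (hcov : ∀ i j, i ≠ j → cov[L i, L j; G] = 0) (hvar : ∀ i, Var[L i; G] ≠ 0) :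
    G.map (fun x i => L i x) = volume.withDensity fun y => ENNReal.ofReal
      (∏ i, gaussianPDFReal G[L i] Var[L i; G].toNNReal (y i)) := by
  have hlaw : HasGaussianLaw (fun x i => L i x) G := ⟨isGaussian_map (.pi L)⟩
  have hmarginal (i) : G.map (L i) = volume.withDensity fun y => ENNReal.ofReal
      (gaussianPDFReal G[L i] Var[L i; G].toNNReal y) := by
    rw [IsGaussian.map_eq_gaussianReal,
      gaussianReal_of_var_ne_zero _ (toNNReal_variance_ne_zero (hvar i))]
    rfl
  rw [(hlaw.iIndepFun_of_covariance_eq_zero hcov).map_fun_eq_pi_map fun i => by fun_prop]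
  simp only [hmarginal]
  exact pi_withDensity_ofReal (fun _ _ => gaussianPDFReal_nonneg _ _ _)
    fun _ => integrable_gaussianPDFReal _ _

variable [FiniteDimensional ℝ E]

lemma exists_continuousLinearEquiv_of_basis_strongDual {ι : Type*} [Finite ι]
    (b : Module.Basis ι ℝ (StrongDual ℝ E)) : ∃ T : E ≃L[ℝ] (ι → ℝ), ∀ x i, T x i = b i x := by
  have := Fintype.ofFinite ι
  let T : E →ₗ[ℝ] (ι → ℝ) := LinearMap.pi fun i => (b i : E →ₗ[ℝ] ℝ)
  have hinj : Function.Injective T := by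
    refine (injective_iff_map_eq_zero T).2 fun x hx =>
      SeparatingDual.eq_zero_of_forall_dual_eq_zero (R := ℝ) fun L => ?_
    have hbx : ∀ i, b i x = 0 := congrFun hx
    rw [← b.sum_repr L, sum_apply]
    exact Finset.sum_eq_zero fun i _ => by rw [smul_apply, hbx, smul_zero]
  have hdim : Module.finrank ℝ E = Module.finrank ℝ (ι → ℝ) := by
    rw [Module.finrank_fintype_fun_eq_card, ← Module.finrank_eq_card_basis b,
      ← LinearMap.toContinuousLinearMap.finrank_eq]
    exact Subspace.dual_finrank_eq.symm
  exact ⟨(LinearMap.linearEquivOfInjective T hinj hdim).toContinuousLinearEquiv, fun _ _ => rfl⟩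

variable [MeasurableSpace E] [BorelSpace E] {v G : Measure E}

lemma exists_basis_strongDual_covariance_eq_zero [IsFiniteMeasure G] (hG : MemLp id 2 G) :
    ∃ b : Module.Basis (Fin (Module.finrank ℝ (StrongDual ℝ E))) ℝ (StrongDual ℝ E),
      ∀ i j, i ≠ j → cov[b i, b j; G] = 0 := by
  obtain ⟨b, hb⟩ := LinearMap.BilinForm.exists_orthogonal_basis
    (B := (covarianceBilinDual G).toBilinForm) ⟨covarianceBilinDual_comm⟩
  refine ⟨b, fun i j hij => ?_⟩
  rw [← covarianceBilinDual_eq_covariance hG]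
  exact hb hij

lemma exists_eq_withDensity_prod_gaussianPDFReal [v.IsAddHaarMeasure] [IsGaussian G]
    (hG : ∀ L : StrongDual ℝ E, L ≠ 0 → Var[L; G] ≠ 0) :
    ∃ b : Module.Basis (Fin (Module.finrank ℝ (StrongDual ℝ E))) ℝ (StrongDual ℝ E),
      ∃ c : NNReal, 0 < c ∧ G = v.withDensity fun x => ENNReal.ofReal
        (c * ∏ i, gaussianPDFReal G[b i] Var[b i; G].toNNReal (b i x)) := by
  obtain ⟨b, hb⟩ := exists_basis_strongDual_covariance_eq_zero (IsGaussian.memLp_two_id (μ := G))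
  obtain ⟨T, hT⟩ := exists_continuousLinearEquiv_of_basis_strongDual b
  have : (v.map T).IsAddHaarMeasure := T.isAddHaarMeasure_map v
  set c := Measure.addHaarScalarFactor volume (v.map T)
  have hvol : volume = (c : ENNReal) • v.map T := Measure.isAddLeftInvariant_eq_smul _ _
  set g := fun y : Fin (Module.finrank ℝ (StrongDual ℝ E)) → ℝ =>
    ∏ i, gaussianPDFReal G[b i] Var[b i; G].toNNReal (y i) with hg
  have hmap : G.map T = (v.map T).withDensity fun y => ENNReal.ofReal (c * g y) := by
    calc G.map T = volume.withDensity fun y => ENNReal.ofReal (g y) := by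
          rw [← map_eq_withDensity_prod_gaussianPDFReal hb fun i => hG _ (b.ne_zero i)]
          exact congrArg G.map (funext₂ hT)
      _ = (v.map T).withDensity ((c : ENNReal) • fun y => ENNReal.ofReal (g y)) := by
          rw [hvol, withDensity_smul_measure, withDensity_smul _ (by fun_prop)]
      _ = (v.map T).withDensity fun y => ENNReal.ofReal (c * g y) := by
          congr with y
          rw [ENNReal.ofReal_mul c.coe_nonneg, ENNReal.ofReal_coe_nnreal, Pi.smul_apply,
            smul_eq_mul]
  refine ⟨b, c, Measure.addHaarScalarFactor_pos_of_isAddHaarMeasure _ _, ?_⟩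
  have hdensity :=
    eq_withDensity_comp_of_map_eq T.toHomeomorph.toMeasurableEquiv (by fun_prop) hmap
  simpa [hg, Function.comp_def, hT] using hdensity

end GaussianDensity

section CoordinateMoments

variable {ι Ω : Type*} [MeasurableSpace Ω] {μ : Measure Ω} {X : Ω → ι → ℝ}

lemma memLp_strongDual_map [Finite ι] (hX : Measurable X)
    (hX_memLp : ∀ i, MemLp (fun ω => X ω i) 2 μ) (L : StrongDual ℝ (ι → ℝ)) :
    MemLp L 2 (μ.map X) := by
  have := Fintype.ofFinite ι
  rw [memLp_map_measure_iff (by fun_prop) hX.aemeasurable]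
  exact L.comp_memLp' (MemLp.of_eval hX_memLp)

variable [Fintype ι]

lemma exists_strongDual_pi_eq_sum_mul (L : StrongDual ℝ (ι → ℝ)) :
    ∃ c : ι → ℝ, ⇑L = fun x => ∑ i, c i * x i := by
  classical
  refine ⟨fun i => L fun j => if i = j then 1 else 0, funext fun x => ?_⟩
  exact (LinearMap.pi_apply_eq_sum_univ (L : (ι → ℝ) →ₗ[ℝ] ℝ) x).trans
    (Fintype.sum_congr _ _ fun i => mul_comm _ _)

lemma integral_sum_mul_sq (hX_memLp : ∀ i, MemLp (fun ω => X ω i) 2 μ) (c : ι → ℝ) :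
    ∫ ω, (∑ i, c i * X ω i) ^ 2 ∂μ = ∑ i, ∑ j, c i * (∫ ω, X ω i * X ω j ∂μ) * c j := by
  have hintegrable (i j) : Integrable (fun ω => c i * (X ω i * X ω j) * c j) μ :=
    (((hX_memLp i).integrable_mul (hX_memLp j)).const_mul (c i)).mul_const (c j)
  calc ∫ ω, (∑ i, c i * X ω i) ^ 2 ∂μ
      = ∫ ω, ∑ i, ∑ j, c i * (X ω i * X ω j) * c j ∂μ := by
        congr with ω
        rw [sq, Fintype.sum_mul_sum]
        exact Fintype.sum_congr _ _ fun i => Fintype.sum_congr _ _ fun j => by ring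
    _ = ∑ i, ∑ j, c i * (∫ ω, X ω i * X ω j ∂μ) * c j := by
        rw [integral_finsetSum _ fun i _ => integrable_finsetSum _ fun j _ => hintegrable i j]
        refine Fintype.sum_congr _ _ fun i => ?_
        rw [integral_finsetSum _ fun j _ => hintegrable i j]
        simp only [integral_mul_const, integral_const_mul]

lemma map_strongDual_eq_gaussianReal {G : Measure (ι → ℝ)} (hX : Measurable X)
    (hX_memLp : ∀ i, MemLp (fun ω => X ω i) 2 μ)
    (hG : ∀ c : ι → ℝ, G.map (fun x => ∑ i, c i * x i) = gaussianReal 0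
      (Real.toNNReal (∑ i, ∑ j, c i * (∫ ω, X ω i * X ω j ∂μ) * c j)))
    (L : StrongDual ℝ (ι → ℝ)) :
    G.map L = gaussianReal 0 (∫ x, L x ^ 2 ∂μ.map X).toNNReal := by
  obtain ⟨c, hc⟩ := exists_strongDual_pi_eq_sum_mul L
  rw [integral_map (by fun_prop) (by fun_prop), hc, hG c, integral_sum_mul_sq hX_memLp]

end CoordinateMoments

section CrossEntropy

variable {E F : Type*}
  [NormedAddCommGroup E] [NormedSpace ℝ E] [FiniteDimensional ℝ E] [MeasurableSpace E]
  [BorelSpace E] {v P G : Measure E} [v.IsAddHaarMeasure] [IsGaussian G]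

lemma gaussian_absolutelyContinuous_addHaar (hG : ∀ L : StrongDual ℝ E, L ≠ 0 → Var[L; G] ≠ 0) :
    G ≪ v := by
  obtain ⟨b, c, -, hdensity⟩ := exists_eq_withDensity_prod_gaussianPDFReal (v := v) hG
  rw [hdensity]
  exact withDensity_absolutelyContinuous _ _

lemma addHaar_absolutelyContinuous_gaussian (hG : ∀ L : StrongDual ℝ E, L ≠ 0 → Var[L; G] ≠ 0) :
    v ≪ G := by
  obtain ⟨b, c, hc, hdensity⟩ := exists_eq_withDensity_prod_gaussianPDFReal (v := v) hG
  have hpdf_pos (i x) : 0 < gaussianPDFReal G[b i] Var[b i; G].toNNReal (b i x) :=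
    gaussianPDFReal_pos _ _ _ (toNNReal_variance_ne_zero (hG _ (b.ne_zero i)))
  have hac := withDensity_absolutelyContinuous' (μ := v) (f := fun x => ENNReal.ofReal
    (c * ∏ i, gaussianPDFReal G[b i] Var[b i; G].toNNReal (b i x))) (by fun_prop) <|
      .of_forall fun x => (ENNReal.ofReal_pos.2 <|
        mul_pos hc (Finset.prod_pos fun i _ => hpdf_pos i x)).ne'
  rwa [← hdensity] at hac

lemma exists_llr_ae_eq_sub_sum_sq_div (hG : ∀ L : StrongDual ℝ E, L ≠ 0 → Var[L; G] ≠ 0) :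
    ∃ (n : ℕ) (L : Fin n → StrongDual ℝ E) (a : ℝ), llr G v =ᵐ[v] fun x =>
      a - ∑ i, (L i x - G[L i]) ^ 2 / (2 * Var[L i; G]) := by
  obtain ⟨b, c, hc, hdensity⟩ := exists_eq_withDensity_prod_gaussianPDFReal (v := v) hG
  have hvar (i) : Var[b i; G].toNNReal ≠ 0 := toNNReal_variance_ne_zero (hG _ (b.ne_zero i))
  have hpdf_pos (i x) := gaussianPDFReal_pos G[b i] Var[b i; G].toNNReal (b i x) (hvar i)
  have hprod_pos (x) := Finset.prod_pos fun i (_ : i ∈ Finset.univ) => hpdf_pos i x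
  have hrnDeriv := Measure.rnDeriv_withDensity v (f := fun x => ENNReal.ofReal
    (c * ∏ i, gaussianPDFReal G[b i] Var[b i; G].toNNReal (b i x))) (by fun_prop)
  rw [← hdensity] at hrnDeriv
  refine ⟨_, b, Real.log c - ∑ i, Real.log √(2 * Real.pi * Var[b i; G].toNNReal), ?_⟩
  filter_upwards [hrnDeriv] with x hx
  have hlog (i) : Real.log (gaussianPDFReal G[b i] Var[b i; G].toNNReal (b i x))
      = -Real.log √(2 * Real.pi * Var[b i; G].toNNReal)
        - (b i x - G[b i]) ^ 2 / (2 * Var[b i; G]) := by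
    rw [log_gaussianPDFReal _ (hvar i), Real.coe_toNNReal _ (variance_nonneg _ _)]
  rw [llr, hx, ENNReal.toReal_ofReal (mul_pos (NNReal.coe_pos.2 hc) (hprod_pos x)).le,
    Real.log_mul (NNReal.coe_pos.2 hc).ne' (hprod_pos x).ne',
    Real.log_prod fun i _ => (hpdf_pos i x).ne']
  simp only [hlog, Finset.sum_sub_distrib, Finset.sum_neg_distrib]
  ring

variable [IsProbabilityMeasure P]

lemma MatchesCovariance.integrable_llr (h : MatchesCovariance P G) (hPv : P ≪ v) :
    Integrable (llr G v) P := by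
  obtain ⟨n, L, a, hllr⟩ := exists_llr_ae_eq_sub_sum_sq_div (v := v) (G := G)
    fun _ => h.variance_ne_zero hPv
  exact (h.integrable_sub_sum_sq_div a L _).congr (hPv.ae_eq hllr).symm

lemma MatchesCovariance.integral_llr_eq (h : MatchesCovariance P G) (hPv : P ≪ v) :
    ∫ x, llr G v x ∂P = ∫ x, llr G v x ∂G := by
  have hvar : ∀ L : StrongDual ℝ E, L ≠ 0 → Var[L; G] ≠ 0 := fun _ => h.variance_ne_zero hPv
  obtain ⟨n, L, a, hllr⟩ := exists_llr_ae_eq_sub_sum_sq_div (v := v) hvar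
  rw [integral_congr_ae (hPv.ae_eq hllr),
    integral_congr_ae ((gaussian_absolutelyContinuous_addHaar hvar).ae_eq hllr),
    h.integral_sub_sum_sq_div, (MatchesCovariance.refl G).integral_sub_sum_sq_div]

theorem conditional_entropy_le_gaussian_general
    [NormedAddCommGroup F] [NormedSpace ℝ F] [MeasurableSpace F] [BorelSpace F]
    {w : Measure F} [w.IsAddHaarMeasure] (h : MatchesCovariance P G)
    {f : E →L[ℝ] F} (hf : Function.Surjective f) (hP : HasFiniteDH v P) :
    dH v P - dH w (P.map f) ≤ dH v G - dH w (G.map f) := by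
  have := Module.Finite.of_surjective (f : E →ₗ[ℝ] F) hf
  have hf_meas : Measurable f := f.measurable
  have := Measure.isProbabilityMeasure_map (μ := P) hf_meas.aemeasurable
  have hvar : ∀ L : StrongDual ℝ E, L ≠ 0 → Var[L; G] ≠ 0 := fun _ => h.variance_ne_zero hP.1
  have hGv : G ≪ v := gaussian_absolutelyContinuous_addHaar hvar
  have hPw : P.map f ≪ w := map_absolutelyContinuous_of_surjective hf hP.1
  have hGw : G.map f ≪ w := map_absolutelyContinuous_of_surjective hf hGv
  have hgibbs := integral_llr_map_sub_integral_llr_map_le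
    (hP.1.trans (addHaar_absolutelyContinuous_gaussian hvar)) hGv hf_meas hGw hP.integrable_llr
    (h.integrable_llr hP.1) ((h.map f).integrable_llr hPw)
  rw [h.integral_llr_eq hP.1, (h.map f).integral_llr_eq hPw] at hgibbs
  rw [dH_eq_neg_integral_llr_div_log_two hP.1, dH_eq_neg_integral_llr_div_log_two hPw,
    dH_eq_neg_integral_llr_div_log_two hGv, dH_eq_neg_integral_llr_div_log_two hGw,
    ← sub_div, ← sub_div]
  exact div_le_div_of_nonneg_right (by linarith) (Real.log_nonneg one_le_two)

end CrossEntropy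

/-- **Lemma (Gaussian maximizes conditional differential entropy; Thomas).**
Let `X = (X₁,…,X_k)` be a zero-mean random vector with covariance matrix `K`
admitting well-defined finite differential entropies, `S ⊆ {1,…,k}` with complement
`S̄`, and let `X*` be a centered Gaussian vector with the same covariance matrix `K`
(characterized by all linear functionals being centered Gaussian).  Then
`h(X_S | X_S̄) ≤ h(X*_S | X*_S̄)`, where `h(X_S|X_S̄) = h(X_S, X_S̄) − h(X_S̄)`. -/
theorem conditional_entropy_le_gaussian {Ω : Type*} [MeasurableSpace Ω]
    (μ : Measure Ω) [IsProbabilityMeasure μ]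
    (k : ℕ) (X : Ω → Fin k → ℝ) (hX : Measurable X)
    (hmean : ∀ i, (∫ ω, X ω i ∂μ) = 0)
    (hsq : ∀ i, Integrable (fun ω => (X ω i) ^ 2) μ)
    (K : Matrix (Fin k) (Fin k) ℝ)
    (hK : ∀ i j, K i j = ∫ ω, X ω i * X ω j ∂μ)
    (G : Measure (Fin k → ℝ)) [IsProbabilityMeasure G]
    (hG : ∀ c : Fin k → ℝ,
      Measure.map (fun x => ∑ i, c i * x i) G
        = gaussianReal 0 (Real.toNNReal (∑ i, ∑ j, c i * K i j * c j)))
    (S : Finset (Fin k))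
    (hfin1 : HasFiniteDH (volume : Measure ((↥S → ℝ) × (↥(Sᶜ) → ℝ)))
      (Measure.map (fun ω => ((fun i : ↥S => X ω i.1), (fun i : ↥(Sᶜ) => X ω i.1))) μ))
    (hfin2 : HasFiniteDH (volume : Measure (↥(Sᶜ) → ℝ))
      (Measure.map (fun ω => fun i : ↥(Sᶜ) => X ω i.1) μ))
    (hfin3 : HasFiniteDH (volume : Measure ((↥S → ℝ) × (↥(Sᶜ) → ℝ)))
      (Measure.map (fun x => ((fun i : ↥S => x i.1), (fun i : ↥(Sᶜ) => x i.1))) G))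
    (hfin4 : HasFiniteDH (volume : Measure (↥(Sᶜ) → ℝ))
      (Measure.map (fun x => fun i : ↥(Sᶜ) => x i.1) G)) :
    dH (volume : Measure ((↥S → ℝ) × (↥(Sᶜ) → ℝ)))
        (Measure.map (fun ω => ((fun i : ↥S => X ω i.1), (fun i : ↥(Sᶜ) => X ω i.1))) μ)
      - dH (volume : Measure (↥(Sᶜ) → ℝ))
          (Measure.map (fun ω => fun i : ↥(Sᶜ) => X ω i.1) μ)
    ≤ dH (volume : Measure ((↥S → ℝ) × (↥(Sᶜ) → ℝ)))
        (Measure.map (fun x => ((fun i : ↥S => x i.1), (fun i : ↥(Sᶜ) => x i.1))) G)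
      - dH (volume : Measure (↥(Sᶜ) → ℝ))
          (Measure.map (fun x => fun i : ↥(Sᶜ) => x i.1) G) := by
  have hX_memLp (i) : MemLp (fun ω => X ω i) 2 μ :=
    (memLp_two_iff_integrable_sq (by fun_prop)).2 (hsq i)
  have hG_map (L) := map_strongDual_eq_gaussianReal hX hX_memLp (by simpa only [← hK] using hG) L
  have : IsGaussian G := isGaussian_of_map_eq_gaussianReal fun L => ⟨_, _, hG_map L⟩
  have hcov : MatchesCovariance (μ.map X) G :=
    .of_map_eq_gaussianReal (memLp_strongDual_map hX hX_memLp) hG_map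
  let R : (Fin k → ℝ) →L[ℝ] (S → ℝ) × (↥Sᶜ → ℝ) :=
    (ContinuousLinearMap.pi fun i => .proj i.1).prod (.pi fun i => .proj i.1)
  have hR_map : (μ.map X).map R = μ.map (R ∘ X) := Measure.map_map R.measurable hX
  have : IsProbabilityMeasure ((μ.map X).map R) :=
    hR_map ▸ Measure.isProbabilityMeasure_map (by fun_prop)
  have : (volume : Measure ((S → ℝ) × (↥Sᶜ → ℝ))).IsAddHaarMeasure :=
    Measure.prod.instIsAddHaarMeasure _ _
  have hentropy := conditional_entropy_le_gaussian_general (v := volume) (w := volume)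
    (hcov.map R) (f := ContinuousLinearMap.snd ℝ _ _) Prod.snd_surjective (hR_map ▸ hfin1)
  rw [hR_map, Measure.map_map (by fun_prop) (by fun_prop),
    Measure.map_map (by fun_prop) (by fun_prop)] at hentropy
  exact hentropy
end
end
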